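/- A splash can only occur through the second fluid (Lemma 2.4): For every δ > 0 there exists ε₃ > 0, depending only on A, T, δ, σ, g, ρ¹, ρ², with the following property: if t ∈ [0,T], α, β ∈ ℝ satisfy |α − β| ≥ δ, and the closed line segment joining z(α,t) and z(β,t) is contained in the closure of Ω¹(t), then |z(α,t) − z(β,t)| ≥ ε₃. -/

import Mathlib

noncomputable section
open Set MeasureTheory Filter

/-- The plane `ℝ²` with the Euclidean norm. -/
abbrev E2 : Type := EuclideanSpace ℝ (Fin 2)

/-- The real inner product on `ℝ²`. -/
def rinner (x y : E2) : ℝ := inner ℝ x y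

/-- The vector `(1,0)`. -/
def xvec : E2 := (EuclideanSpace.equiv (Fin 2) ℝ).symm ![1, 0]

/-- The vector `(0,1)`. -/
def e2vec : E2 := (EuclideanSpace.equiv (Fin 2) ℝ).symm ![0, 1]

/-- The period vector `(2π, 0)`. -/
def transl : E2 := (EuclideanSpace.equiv (Fin 2) ℝ).symm ![2 * Real.pi, 0]

/-- The rotation of a vector by `π/2`: `(x,y)^⊥ = (-y,x)`. -/
def perpv (w : E2) : E2 := (EuclideanSpace.equiv (Fin 2) ℝ).symm ![-(w 1), w 0]

/-- The chord-arc function `F(z)` of a time-dependent curve. -/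
def chordArcT (z : ℝ → ℝ → E2) (α β t : ℝ) : ℝ :=
  if α = β then ‖deriv (fun a => z a t) α‖ else ‖z α t - z β t‖ / |α - β|

/-- The two-fluid interface system on the time interval `[0,T]`, in the `2π`-periodic setting,
with densities `ρ1, ρ2`, surface tension coefficient `σ`, gravity constant `grav`, and
quantitative bounds measured by the constant `A`. -/
structure TwoFluid (ρ1 ρ2 σ grav T A : ℝ) where
  /-- the parametrization of the interface -/
  z : ℝ → ℝ → E2
  /-- the domain of the first fluid -/
  Ω1 : ℝ → Set E2
  /-- the domain of the second fluid -/
  Ω2 : ℝ → Set E2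
  /-- the velocity field of the first fluid -/
  u1 : E2 → ℝ → E2
  /-- the velocity field of the second fluid -/
  u2 : E2 → ℝ → E2
  /-- the pressure of the first fluid -/
  P1 : E2 → ℝ → ℝ
  /-- the pressure of the second fluid -/
  P2 : E2 → ℝ → ℝ
  hΩ1_open : ∀ t ∈ Icc (0:ℝ) T, IsOpen (Ω1 t)
  hΩ2_open : ∀ t ∈ Icc (0:ℝ) T, IsOpen (Ω2 t)
  hΩ1_conn : ∀ t ∈ Icc (0:ℝ) T, IsConnected (Ω1 t)
  hΩ2_conn : ∀ t ∈ Icc (0:ℝ) T, IsConnected (Ω2 t)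
  hΩ1_sc : ∀ t ∈ Icc (0:ℝ) T, SimplyConnectedSpace (Ω1 t)
  hΩ2_sc : ∀ t ∈ Icc (0:ℝ) T, SimplyConnectedSpace (Ω2 t)
  /-- `ℝ²` is the disjoint union of `Ω1 t`, `Ω2 t` and the interface `Γ_t` -/
  hUnion : ∀ t ∈ Icc (0:ℝ) T, Ω1 t ∪ Ω2 t ∪ range (fun α => z α t) = univ
  hDisj12 : ∀ t ∈ Icc (0:ℝ) T, Disjoint (Ω1 t) (Ω2 t)
  hDisj1Γ : ∀ t ∈ Icc (0:ℝ) T, Disjoint (Ω1 t) (range (fun α => z α t))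
  hDisj2Γ : ∀ t ∈ Icc (0:ℝ) T, Disjoint (Ω2 t) (range (fun α => z α t))
  hFront1 : ∀ t ∈ Icc (0:ℝ) T, frontier (Ω1 t) = range (fun α => z α t)
  hFront2 : ∀ t ∈ Icc (0:ℝ) T, frontier (Ω2 t) = range (fun α => z α t)
  /-- `Ω1` contains a lower half-plane and `Ω2` an upper half-plane -/
  hStrip : ∃ a : ℝ, 1 ≤ a ∧ ∀ t ∈ Icc (0:ℝ) T,
      {x : E2 | x 1 ≤ -a} ⊆ Ω1 t ∧ {x : E2 | a ≤ x 1} ⊆ Ω2 t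
  /-- `u1(·,t)` is `C³` on the closure of `Ω1 t` -/
  hu1_reg : ∀ t ∈ Icc (0:ℝ) T, ContDiffOn ℝ 3 (fun x => u1 x t) (closure (Ω1 t))
  hu2_reg : ∀ t ∈ Icc (0:ℝ) T, ContDiffOn ℝ 3 (fun x => u2 x t) (closure (Ω2 t))
  hP1_reg : ∀ t ∈ Icc (0:ℝ) T, ContDiffOn ℝ 1 (fun x => P1 x t) (closure (Ω1 t))
  hP2_reg : ∀ t ∈ Icc (0:ℝ) T, ContDiffOn ℝ 1 (fun x => P2 x t) (closure (Ω2 t))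
  /-- Euler's equation in `Ω1 t` -/
  hEuler1 : ∀ t ∈ Icc (0:ℝ) T, ∀ x ∈ Ω1 t,
      ρ1 • (deriv (fun s => u1 x s) t + fderiv ℝ (fun y => u1 y t) x (u1 x t)) =
        -gradient (fun y => P1 y t) x - (grav * ρ1) • e2vec
  /-- Euler's equation in `Ω2 t` -/
  hEuler2 : ∀ t ∈ Icc (0:ℝ) T, ∀ x ∈ Ω2 t,
      ρ2 • (deriv (fun s => u2 x s) t + fderiv ℝ (fun y => u2 y t) x (u2 x t)) =
        -gradient (fun y => P2 y t) x - (grav * ρ2) • e2vec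
  /-- incompressibility of the first fluid -/
  hdiv1 : ∀ t ∈ Icc (0:ℝ) T, ∀ x ∈ Ω1 t,
      fderiv ℝ (fun y => u1 y t) x (EuclideanSpace.single 0 1) 0 +
        fderiv ℝ (fun y => u1 y t) x (EuclideanSpace.single 1 1) 1 = 0
  hdiv2 : ∀ t ∈ Icc (0:ℝ) T, ∀ x ∈ Ω2 t,
      fderiv ℝ (fun y => u2 y t) x (EuclideanSpace.single 0 1) 0 +
        fderiv ℝ (fun y => u2 y t) x (EuclideanSpace.single 1 1) 1 = 0
  /-- irrotationality of the first fluid -/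
  hcurl1 : ∀ t ∈ Icc (0:ℝ) T, ∀ x ∈ Ω1 t,
      fderiv ℝ (fun y => u1 y t) x (EuclideanSpace.single 0 1) 1 -
        fderiv ℝ (fun y => u1 y t) x (EuclideanSpace.single 1 1) 0 = 0
  hcurl2 : ∀ t ∈ Icc (0:ℝ) T, ∀ x ∈ Ω2 t,
      fderiv ℝ (fun y => u2 y t) x (EuclideanSpace.single 0 1) 1 -
        fderiv ℝ (fun y => u2 y t) x (EuclideanSpace.single 1 1) 0 = 0
  /-- kinematic boundary condition for the first fluid -/
  hkin1 : ∀ t ∈ Icc (0:ℝ) T, ∀ α : ℝ,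
      rinner (deriv (fun s => z α s) t - u1 (z α t) t) (perpv (deriv (fun a => z a t) α)) = 0
  hkin2 : ∀ t ∈ Icc (0:ℝ) T, ∀ α : ℝ,
      rinner (deriv (fun s => z α s) t - u2 (z α t) t) (perpv (deriv (fun a => z a t) α)) = 0
  /-- the pressure jump at the interface is given by the surface tension times the curvature -/
  hjump : ∀ t ∈ Icc (0:ℝ) T, ∀ α : ℝ,
      P2 (z α t) t - P1 (z α t) t =
        -σ * (deriv (fun a => z a t) α 0 * deriv (fun a => deriv (fun b => z b t) a) α 1 -
              deriv (fun a => z a t) α 1 * deriv (fun a => deriv (fun b => z b t) a) α 0) /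
          ((deriv (fun a => z a t) α 0) ^ 2 + (deriv (fun a => z a t) α 1) ^ 2) ^ ((3:ℝ)/2)
  /-- `2π`-periodicity -/
  hper_z : ∀ t ∈ Icc (0:ℝ) T, ∀ α : ℝ, z (α + 2 * Real.pi) t = z α t + transl
  hper_Ω1 : ∀ t ∈ Icc (0:ℝ) T, (fun x => x + transl) '' Ω1 t = Ω1 t
  hper_Ω2 : ∀ t ∈ Icc (0:ℝ) T, (fun x => x + transl) '' Ω2 t = Ω2 t
  hper_u1 : ∀ t ∈ Icc (0:ℝ) T, ∀ x ∈ Ω1 t, u1 (x + transl) t = u1 x t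
  hper_u2 : ∀ t ∈ Icc (0:ℝ) T, ∀ x ∈ Ω2 t, u2 (x + transl) t = u2 x t
  /-- finite kinetic energy in a period -/
  hL2_1 : ∀ t ∈ Icc (0:ℝ) T,
      IntegrableOn (fun x => ‖u1 x t‖ ^ 2) (Ω1 t ∩ {x : E2 | x 0 ∈ Icc 0 (2 * Real.pi)})
  hL2_2 : ∀ t ∈ Icc (0:ℝ) T,
      IntegrableOn (fun x => ‖u2 x t‖ ^ 2) (Ω2 t ∩ {x : E2 | x 0 ∈ Icc 0 (2 * Real.pi)})
  /-- `z(α,t) - (α,0)` is `C⁴` with all derivatives of order `≤ 4` bounded by `A` -/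
  hz_smooth : ContDiffOn ℝ 4 (fun p : ℝ × ℝ => z p.1 p.2 - p.1 • xvec) (univ ×ˢ Icc (0:ℝ) T)
  hz_bound : ∀ p ∈ (univ ×ˢ Icc (0:ℝ) T : Set (ℝ × ℝ)), ∀ i : ℕ, i ≤ 4 →
      ‖iteratedFDerivWithin ℝ i (fun p : ℝ × ℝ => z p.1 p.2 - p.1 • xvec)
          (univ ×ˢ Icc (0:ℝ) T) p‖ ≤ A
  /-- the parametrization is regular -/
  hz_lower : ∀ t ∈ Icc (0:ℝ) T, ∀ α : ℝ, A⁻¹ ≤ ‖deriv (fun a => z a t) α‖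
  /-- `v¹(α,t) = u¹(z(α,t),t)` is `C³` with all derivatives of order `≤ 3` bounded by `A` -/
  hv1_smooth : ContDiffOn ℝ 3 (fun p : ℝ × ℝ => u1 (z p.1 p.2) p.2) (univ ×ˢ Icc (0:ℝ) T)
  hv1_bound : ∀ p ∈ (univ ×ˢ Icc (0:ℝ) T : Set (ℝ × ℝ)), ∀ i : ℕ, i ≤ 3 →
      ‖iteratedFDerivWithin ℝ i (fun p : ℝ × ℝ => u1 (z p.1 p.2) p.2)
          (univ ×ˢ Icc (0:ℝ) T) p‖ ≤ A
  /-- the chord-arc condition at time `0` -/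
  hchord0 : ∀ α β : ℝ, A⁻¹ ≤ chordArcT z α β 0
  /-- `u²` is bounded by `A` on the interface at time `0` -/
  hu2_init : ∀ α : ℝ, ‖u2 (z α 0) 0‖ ≤ A

open Metric Topology

/-!
Among the chords `[z(α,t), z(β,t)]` in the closure of `Ω t` with `|α - β| ≥ d`, one minimises the
weighted length `exp(Ct) |z(α,t) - z(β,t)|`, by periodicity and compactness. The velocity is
divergence and curl free, so its complex velocity is holomorphic and its derivative obeys the
maximum principle: `|∇u|` is at most its supremum on the interface, which the trace of `u` bounds by
`A²`. Hence the velocities at the ends of a chord inside the fluid differ by at most `A²` times its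
length. If the minimal chord is very short, regularity of `z` keeps `|α - β|` well above `d`, so the
open chord does not touch the interface. Following its ends backward in time then produces a chord
of smaller weighted length when `C > A²`, which is impossible unless `t = 0`, where the chord-arc
condition applies.

The argument uses that `z(·,t)` is injective. Otherwise a simple closed subloop of the interface
would have a Cauchy integral that vanishes on the fluid and on its exterior, both connected and
unbounded, but jumps by `2πi` across the loop.
-/

/-! ### Mean values and the maximum principle for holomorphic functions -/

theorem integral_Ioo_circleMap {E : Type*} [NormedAddCommGroup E] [NormedSpace ℝ E]
    (f : ℂ → E) (c : ℂ) (r : ℝ) :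
    ∫ θ in Ioo (-Real.pi) Real.pi, f (circleMap c r θ) =
      (2 * Real.pi) • Real.circleAverage f c r := by
  rw [Real.circleAverage_eq_integral_add (-Real.pi),
    intervalIntegral.integral_comp_add_right (fun θ => f (circleMap c r θ)), zero_add,
    show 2 * Real.pi + -Real.pi = Real.pi by ring, smul_smul, mul_inv_cancel₀ (by positivity),
    one_smul, intervalIntegral.integral_of_le (by linarith [Real.pi_pos]),
    integral_Ioc_eq_integral_Ioo]

theorem setIntegral_closedBall_eq_integral_circleAverage {E : Type*} [NormedAddCommGroup E]
    [NormedSpace ℝ E] {f : ℂ → E} {c : ℂ} {R : ℝ} (hR : 0 ≤ R)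
    (hf : ContinuousOn f (closedBall c R)) :
    ∫ w in closedBall c R, f w = ∫ r in 0..R, (r * (2 * Real.pi)) • Real.circleAverage f c r := by
  have hpolar : ∀ p ∈ polarCoord.target,
      p.1 • (closedBall c R).indicator f (c + Complex.polarCoord.symm p) =
        (Ioc 0 R ×ˢ Ioo (-Real.pi) Real.pi).indicator
          (fun p : ℝ × ℝ => p.1 • f (circleMap c p.1 p.2)) p := by
    rintro ⟨r, θ⟩ ⟨hr : 0 < r, hθ⟩
    have hmap : c + Complex.polarCoord.symm (r, θ) = circleMap c r θ := by
      rw [Complex.polarCoord_symm_apply, circleMap, Complex.exp_mul_I, Complex.ofReal_cos,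
        Complex.ofReal_sin]
    have hmem : circleMap c r θ ∈ closedBall c R ↔ (r, θ) ∈ Ioc 0 R ×ˢ Ioo (-Real.pi) Real.pi := by
      simp [dist_eq_norm, abs_of_pos hr, hr, hθ.1, hθ.2]
    by_cases h : circleMap c r θ ∈ closedBall c R
    · rw [hmap, indicator_of_mem h, indicator_of_mem (hmem.1 h)]
    · rw [hmap, indicator_of_notMem h, indicator_of_notMem (mt hmem.2 h), smul_zero]
  have hint : IntegrableOn (fun p : ℝ × ℝ => p.1 • f (circleMap c p.1 p.2))
      (Ioc 0 R ×ˢ Ioo (-Real.pi) Real.pi) := by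
    refine IntegrableOn.mono_set (ContinuousOn.integrableOn_compact
      (isCompact_Icc.prod isCompact_Icc) (continuousOn_fst.smul (hf.comp ?_ ?_)))
      (prod_mono Ioc_subset_Icc_self Ioo_subset_Icc_self)
    · exact Continuous.continuousOn (by unfold circleMap; fun_prop)
    · rintro p ⟨hp, -⟩
      simpa [dist_eq_norm, abs_of_nonneg hp.1] using hp.2
  have hsub : Ioc 0 R ×ˢ Ioo (-Real.pi) Real.pi ⊆ polarCoord.target :=
    prod_mono (fun _ h => h.1) le_rfl
  rw [← integral_indicator isClosed_closedBall.measurableSet, ← integral_add_left_eq_self _ c,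
    ← Complex.integral_comp_polarCoord_symm,
    setIntegral_congr_fun polarCoord.open_target.measurableSet hpolar,
    setIntegral_indicator (measurableSet_Ioc.prod measurableSet_Ioo), inter_eq_right.2 hsub,
    Measure.volume_eq_prod, setIntegral_prod _ hint, intervalIntegral.integral_of_le hR]
  simp only [integral_smul, integral_Ioo_circleMap, smul_smul]

theorem setIntegral_closedBall_of_diffContOnCl {E : Type*} [NormedAddCommGroup E]
    [NormedSpace ℂ E] [CompleteSpace E] {f : ℂ → E} {c : ℂ} {R : ℝ} (hR : 0 < R)
    (hf : DiffContOnCl ℂ f (ball c R)) :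
    ∫ w in closedBall c R, f w = (Real.pi * R ^ 2) • f c := by
  have hmean : ∀ r ∈ uIcc 0 R, (r * (2 * Real.pi)) • Real.circleAverage f c r =
      (r * (2 * Real.pi)) • f c := by
    intro r hr
    rw [uIcc_of_le hR.le] at hr
    rw [(hf.mono <| by simpa only [abs_of_nonneg hr.1] using ball_subset_ball hr.2).circleAverage]
  rw [setIntegral_closedBall_eq_integral_circleAverage hR.le hf.continuousOn_ball,
    intervalIntegral.integral_congr hmean, intervalIntegral.integral_smul_const,
    intervalIntegral.integral_mul_const, integral_id]
  congr 1
  ring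

theorem norm_sq_le_setIntegral_norm_sq {f : ℂ → ℂ} {c : ℂ} {R : ℝ} (hR : 0 < R)
    (hf : DiffContOnCl ℂ f (ball c R)) :
    Real.pi * R ^ 2 * ‖f c‖ ^ 2 ≤ ∫ w in closedBall c R, ‖f w‖ ^ 2 := by
  have hsq : DiffContOnCl ℂ (fun w => f w ^ 2) (ball c R) :=
    ⟨hf.differentiableOn.pow 2, hf.continuousOn.pow 2⟩
  calc Real.pi * R ^ 2 * ‖f c‖ ^ 2
      = ‖∫ w in closedBall c R, f w ^ 2‖ := by
        rw [setIntegral_closedBall_of_diffContOnCl hR hsq, norm_smul, norm_pow,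
          Real.norm_of_nonneg (by positivity)]
    _ ≤ ∫ w in closedBall c R, ‖f w ^ 2‖ := norm_integral_le_integral_norm _
    _ = ∫ w in closedBall c R, ‖f w‖ ^ 2 := by simp only [norm_pow]

/-- The maximum principle applied to `gⁿ / (w - p)`, which is small at infinity. -/
theorem norm_pow_le_mul_dist_of_bounded {U : Set ℂ} {p : ℂ} {d : ℝ} (hd : 0 < d)
    (hp : ∀ w ∈ closure U, d ≤ ‖w - p‖) {g : ℂ → ℂ} (hg : DiffContOnCl ℂ g U) {M B : ℝ}
    (hM : ∀ w ∈ closure U, ‖g w‖ ≤ M) (hB0 : 0 < B) (hB : ∀ w ∈ frontier U, ‖g w‖ ≤ B) (n : ℕ)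
    {w : ℂ} (hw : w ∈ closure U) : ‖g w‖ ^ n ≤ B ^ n / d * ‖w - p‖ := by
  have hM0 : 0 ≤ M := (norm_nonneg _).trans (hM w hw)
  obtain ⟨R, hRd, hRM, hwR⟩ : ∃ R, 0 < R ∧ M ^ n / R ≤ B ^ n / d ∧ ‖w - p‖ < R := by
    refine ⟨max (M ^ n / (B ^ n / d)) ‖w - p‖ + 1, by positivity, ?_, ?_⟩
    · rw [div_le_comm₀ (by positivity) (by positivity)]
      exact (le_max_left _ _).trans (lt_add_one _).le
    · exact (le_max_right _ _).trans_lt (lt_add_one _)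
  have hne : ∀ v ∈ closure U, v - p ≠ 0 := fun v hv =>
    norm_pos_iff.1 (hd.trans_le (hp v hv))
  have hdiff : DiffContOnCl ℂ (fun v => g v ^ n / (v - p)) U :=
    ⟨(hg.differentiableOn.pow n).div (by fun_prop) fun v hv => hne v (subset_closure hv),
      (hg.continuousOn.pow n).div (by fun_prop) hne⟩
  have hbound : ∀ v ∈ frontier (U ∩ ball p R), ‖g v ^ n / (v - p)‖ ≤ B ^ n / d := by
    intro v hv
    rw [norm_div, norm_pow]
    rcases frontier_inter_subset U (ball p R) hv with ⟨hvU, -⟩ | ⟨hvU, hvR⟩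
    · have := hp v (frontier_subset_closure hvU)
      gcongr
      exact hB v hvU
    · rw [frontier_ball p hRd.ne', mem_sphere_iff_norm] at hvR
      rw [hvR]
      refine le_trans ?_ hRM
      gcongr
      exact hM v hvU
  have hle := Complex.norm_le_of_forall_mem_frontier_norm_le
    (isBounded_ball.subset inter_subset_right) (hdiff.mono inter_subset_left) hbound
    (show w ∈ closure (U ∩ ball p R) from
      (inter_comm (ball p R) U ▸ isOpen_ball.inter_closure)
        ⟨by simpa [dist_eq_norm] using hwR, hw⟩)
  rwa [norm_div, norm_pow, div_le_iff₀ (norm_pos_iff.2 (hne w hw))] at hle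

theorem norm_le_of_bounded_of_notMem_closure {U : Set ℂ} {p : ℂ} (hp : p ∉ closure U)
    {g : ℂ → ℂ} (hg : DiffContOnCl ℂ g U) {M B : ℝ} (hM : ∀ w ∈ closure U, ‖g w‖ ≤ M)
    (hB0 : 0 < B) (hB : ∀ w ∈ frontier U, ‖g w‖ ≤ B) {w : ℂ} (hw : w ∈ closure U) :
    ‖g w‖ ≤ B := by
  obtain ⟨d, hd, hball⟩ := Metric.isOpen_iff.1 isClosed_closure.isOpen_compl p hp
  have hdist : ∀ v ∈ closure U, d ≤ ‖v - p‖ := by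
    intro v hv
    by_contra! hlt
    exact hball (mem_ball_iff_norm.2 hlt) hv
  by_contra! hlt
  obtain ⟨n, hn⟩ := pow_unbounded_of_one_lt (‖w - p‖ / d) ((one_lt_div hB0).2 hlt)
  have hle := norm_pow_le_mul_dist_of_bounded hd hdist hg hM hB0 hB n hw
  rw [div_pow, lt_div_iff₀ (by positivity)] at hn
  refine hn.not_ge (hle.trans_eq ?_)
  ring

section Periodic

variable {p a : ℝ} {U : Set ℂ} {f : ℂ → ℂ}

theorem integrableOn_two_periods (hU : Function.Periodic (· ∈ U) (p : ℂ))
    (hf : Function.Periodic f p)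
    (hL2 : IntegrableOn (fun w => ‖f w‖ ^ 2) (U ∩ {w | w.re ∈ Icc 0 p})) :
    IntegrableOn (fun w => ‖f w‖ ^ 2) (U ∩ {w | w.re ∈ Icc 0 (2 * p)}) := by
  have hpre : (fun w : ℂ => w - p) ⁻¹' (U ∩ {w | w.re ∈ Icc 0 p}) =
      U ∩ {w | w.re ∈ Icc p (2 * p)} := by
    ext w
    have hmem : w - p ∈ U ↔ w ∈ U := iff_of_eq (hU.sub_eq w)
    simp only [mem_preimage, mem_inter_iff, hmem, mem_ofPred_eq, Complex.sub_re,
      Complex.ofReal_re, mem_Icc, sub_nonneg, sub_le_iff_le_add, two_mul]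
  have hshift : IntegrableOn (fun w => ‖f w‖ ^ 2) (U ∩ {w | w.re ∈ Icc p (2 * p)}) := by
    rw [← hpre]
    simpa only [Function.comp_def, hf.sub_eq] using
      ((measurePreserving_sub_right volume (p : ℂ)).integrableOn_comp_preimage
        (MeasurableEquiv.subRight (p : ℂ)).measurableEmbedding).2 hL2
  refine (hL2.union hshift).mono_set ?_
  rintro w ⟨hwU, h0, h2⟩
  exact (le_total w.re p).imp (fun h => ⟨hwU, h0, h⟩) (fun h => ⟨hwU, h, h2⟩)

theorem exists_norm_le_of_periodic_of_integrableOn (hp : 0 < p)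
    (hU : Function.Periodic (· ∈ U) (p : ℂ)) (hlow : ∀ w : ℂ, w.im ≤ -a → w ∈ U)
    (hf : Function.Periodic f p) (hfU : DifferentiableOn ℂ f U)
    (hL2 : IntegrableOn (fun w => ‖f w‖ ^ 2) (U ∩ {w | w.re ∈ Icc 0 p})) :
    ∃ C, ∀ w : ℂ, w.im ≤ -a - p → ‖f w‖ ≤ C := by
  set S := U ∩ {w : ℂ | w.re ∈ Icc 0 (2 * p)}
  have hS : IntegrableOn (fun w => ‖f w‖ ^ 2) S := integrableOn_two_periods hU hf hL2
  set r := p / 2 with hr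
  refine ⟨√((Real.pi * r ^ 2)⁻¹ * ∫ w in S, ‖f w‖ ^ 2), fun w hw => ?_⟩
  obtain ⟨n, ⟨hn₁, hn₂⟩, -⟩ := existsUnique_add_zsmul_mem_Ico hp w.re r
  set v : ℂ := w + n * p with hv
  rw [zsmul_eq_mul] at hn₁ hn₂
  have hvre : v.re ∈ Icc r (r + p) := by simpa [hv] using ⟨hn₁, hn₂.le⟩
  have hvim : v.im = w.im := by simp [hv]
  have hball : closedBall v r ⊆ S := by
    intro y hy
    have hy' : ‖y - v‖ ≤ r := mem_closedBall_iff_norm.1 hy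
    have hre := abs_le.1 ((Complex.abs_re_le_norm _).trans hy')
    have him := abs_le.1 ((Complex.abs_im_le_norm _).trans hy')
    simp only [Complex.sub_re, Complex.sub_im] at hre him
    exact ⟨hlow y (by linarith [him.2]), by linarith [hre.1, hvre.1], by linarith [hre.2, hvre.2]⟩
  have hmean := norm_sq_le_setIntegral_norm_sq (by positivity : 0 < r)
    (hfU.diffContOnCl_ball (hball.trans inter_subset_left))
  have hmono : ∫ w in closedBall v r, ‖f w‖ ^ 2 ≤ ∫ w in S, ‖f w‖ ^ 2 :=
    setIntegral_mono_set hS (Eventually.of_forall fun _ => by positivity) hball.eventuallyLE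
  rw [← hf.int_mul n w]
  refine Real.le_sqrt_of_sq_le ?_
  rw [inv_mul_eq_div, le_div_iff₀' (by positivity)]
  exact hmean.trans hmono

theorem exists_norm_deriv_le_of_periodic_of_integrableOn (hp : 0 < p)
    (hU : Function.Periodic (· ∈ U) (p : ℂ)) (hlow : ∀ w : ℂ, w.im ≤ -a → w ∈ U)
    (hf : Function.Periodic f p) (hfU : DifferentiableOn ℂ f U)
    (hL2 : IntegrableOn (fun w => ‖f w‖ ^ 2) (U ∩ {w | w.re ∈ Icc 0 p})) :
    ∃ C, ∀ w : ℂ, w.im ≤ -a - 2 * p → ‖deriv f w‖ ≤ C := by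
  obtain ⟨C, hC⟩ := exists_norm_le_of_periodic_of_integrableOn hp hU hlow hf hfU hL2
  refine ⟨C / p, fun w hw => ?_⟩
  have him : ∀ v ∈ closedBall w p, v.im ≤ -a - p := by
    intro v hv
    have := (abs_le.1 ((Complex.abs_im_le_norm _).trans (mem_closedBall_iff_norm.1 hv))).2
    rw [Complex.sub_im] at this
    linarith
  refine Complex.norm_deriv_le_of_forall_mem_sphere_norm_le hp ?_
    fun v hv => hC v (him v (sphere_subset_closedBall hv))
  exact hfU.diffContOnCl_ball fun v hv => hlow v (by linarith [him v hv])

theorem norm_le_of_periodic_of_norm_le_frontier (hp : 0 < p) (hUo : IsOpen U)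
    (hU : Function.Periodic (· ∈ U) (p : ℂ)) (hlow : ∀ w : ℂ, w.im ≤ -a → w ∈ U)
    (hup : ∀ w ∈ U, w.im ≤ a) (hf : Function.Periodic f p) (hfU : DifferentiableOn ℂ f U)
    (hL2 : IntegrableOn (fun w => ‖f w‖ ^ 2) (U ∩ {w | w.re ∈ Icc 0 p}))
    {g : ℂ → ℂ} (hg : ContinuousOn g (closure U)) (hgf : EqOn g (deriv f) U) {B : ℝ}
    (hB0 : 0 < B) (hB : ∀ w ∈ frontier U, ‖g w‖ ≤ B) : ∀ w ∈ closure U, ‖g w‖ ≤ B := by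
  obtain ⟨C₁, hC₁⟩ := exists_norm_deriv_le_of_periodic_of_integrableOn hp hU hlow hf hfU hL2
  obtain ⟨C₂, hC₂⟩ := ((isCompact_Icc.reProdIm isCompact_Icc).inter_left
    isClosed_closure).exists_bound_of_continuousOn
      (hg.mono (inter_subset_left (t := Icc 0 p ×ℂ Icc (-a - 2 * p) a)))
  have hderiv : Function.Periodic (deriv f) p := fun w => by
    rw [← deriv_comp_add_const, funext hf]
  have hM : ∀ w ∈ U, ‖g w‖ ≤ max C₁ C₂ := by
    intro w hw
    rw [hgf hw]
    rcases le_total w.im (-a - 2 * p) with h | h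
    · exact (hC₁ w h).trans (le_max_left _ _)
    obtain ⟨n, ⟨hn₁, hn₂⟩, -⟩ := existsUnique_add_zsmul_mem_Ico hp w.re 0
    rw [zsmul_eq_mul] at hn₁ hn₂
    have hvU : w + n * p ∈ U := (hU.int_mul n w).mpr hw
    rw [← hderiv.int_mul n w, ← hgf hvU]
    refine (hC₂ _ ⟨subset_closure hvU, ?_⟩).trans (le_max_right _ _)
    rw [Complex.mem_reProdIm]
    constructor
    · simpa using ⟨hn₁, (hn₂.trans_eq (zero_add p)).le⟩
    · have him : (w + n * p).im = w.im := by simp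
      rw [him]
      exact ⟨h, hup w hw⟩
  have hcl : MapsTo g (closure U) (closure (closedBall 0 (max C₁ C₂))) :=
    MapsTo.closure_of_continuousOn (fun w hw => mem_closedBall_zero_iff.2 (hM w hw)) hg
  rw [isClosed_closedBall.closure_eq] at hcl
  have hdist : (⟨0, a + 1⟩ : ℂ) ∉ closure U := fun h => by
    have := closure_minimal (t := {w : ℂ | w.im ≤ a}) hup
      (isClosed_le Complex.continuous_im continuous_const) h
    simp only [mem_ofPred_eq] at this
    linarith
  intro w hw
  refine norm_le_of_bounded_of_notMem_closure hdist ⟨?_, hg⟩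
    (fun v hv => mem_closedBall_zero_iff.1 (hcl hv)) hB0 hB hw
  exact (hfU.deriv hUo).congr hgf

end Periodic

/-! ### Divergence and curl free fields as holomorphic functions -/

theorem exists_continuousOn_hasFDerivWithinAt_closure {𝕜 E F : Type*}
    [NontriviallyNormedField 𝕜] [NormedAddCommGroup E] [NormedSpace 𝕜 E] [NormedAddCommGroup F]
    [NormedSpace 𝕜 F] {s : Set E} (hs : IsOpen s) {f : E → F}
    (hf : ContDiffOn 𝕜 1 f (closure s)) :
    ∃ G : E → E →L[𝕜] F, ContinuousOn G (closure s) ∧ EqOn G (fderiv 𝕜 f) s ∧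
      ∀ x ∈ closure s, HasFDerivWithinAt f (G x) (closure s) x := by
  have hlim : ∀ x ∈ closure s, ∃ L : E →L[𝕜] F, Tendsto (fderiv 𝕜 f) (𝓝[s] x) (𝓝 L) ∧
      HasFDerivWithinAt f L (closure s) x := by
    intro x hx
    obtain ⟨v, hv, -, f', hf', hcont⟩ :=
      (contDiffOn_succ_iff_hasFDerivWithinAt (n := 0) (by simp)).1 (by simpa using hf) x hx
    rw [insert_eq_of_mem hx] at hv
    have hxv : x ∈ v := mem_of_mem_nhdsWithin hx hv
    obtain ⟨V, hV, hxV, hVv⟩ := mem_nhdsWithin.1 hv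
    refine ⟨f' x, ?_, (hf' x hxv).mono_of_mem_nhdsWithin hv⟩
    have hVs : V ∩ s ⊆ v := fun y hy => hVv ⟨hy.1, subset_closure hy.2⟩
    rw [← nhdsWithin_inter_of_mem' (mem_nhdsWithin_of_mem_nhds (hV.mem_nhds hxV)), inter_comm]
    refine ((hcont.continuousOn x hxv).mono hVs).tendsto.congr' ?_
    filter_upwards [self_mem_nhdsWithin] with y hy
    have hvy : v ∈ 𝓝 y := mem_of_superset ((hV.inter hs).mem_nhds hy) hVs
    exact ((hf' y (hVs hy)).hasFDerivAt hvy).fderiv.symm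
  choose! L hL hLd using hlim
  have hext : EqOn (extendFrom s (fderiv 𝕜 f)) L (closure s) := fun x hx =>
    extendFrom_eq hx (hL x hx)
  refine ⟨extendFrom s (fderiv 𝕜 f), continuousOn_extendFrom le_rfl fun x hx => ⟨L x, hL x hx⟩,
    fun x hx => ?_, fun x hx => (hext hx).symm ▸ hLd x hx⟩
  rw [hext (subset_closure hx)]
  exact ((hLd x (subset_closure hx)).hasFDerivAt
    (mem_of_superset (hs.mem_nhds hx) subset_closure)).fderiv.symm

/-- The isometric identification of the complex plane with `ℝ²`. -/
def planeIso : ℂ ≃ₗᵢ[ℝ] E2 := Complex.orthonormalBasisOneI.repr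

/-- The isometry `x ↦ x₀ - i x₁` from `ℝ²` to the complex plane, which turns a velocity field into
its complex velocity. -/
def conjIso : E2 ≃ₗᵢ[ℝ] ℂ := planeIso.symm.trans Complex.conjLIE

theorem planeIso_apply_zero (w : ℂ) : planeIso w 0 = w.re := by simp [planeIso]

theorem planeIso_apply_one (w : ℂ) : planeIso w 1 = w.im := by simp [planeIso]

theorem planeIso_two_pi : planeIso ((2 * Real.pi : ℝ) : ℂ) = transl := by
  ext i
  fin_cases i
  · simp [planeIso_apply_zero, transl]
  · simp [planeIso_apply_one, transl]

theorem planeIso_eq (w : ℂ) :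
    planeIso w = w.re • EuclideanSpace.single 0 1 + w.im • EuclideanSpace.single 1 1 := by
  ext i
  fin_cases i
  · simp [planeIso_apply_zero]
  · simp [planeIso_apply_one]

theorem conjIso_apply (x : E2) : conjIso x = ⟨x 0, -x 1⟩ := by
  obtain ⟨w, rfl⟩ := planeIso.surjective x
  rw [planeIso_apply_zero, planeIso_apply_one]
  simp only [conjIso, LinearIsometryEquiv.trans_apply, LinearIsometryEquiv.symm_apply_apply,
    Complex.conjLIE_apply]
  rfl

/-- The derivative of a plane vector field is trace free (zero divergence) and symmetric (zero
curl). -/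
def IsDivCurlFree (L : E2 →L[ℝ] E2) : Prop :=
  L (EuclideanSpace.single 0 1) 0 + L (EuclideanSpace.single 1 1) 1 = 0 ∧
    L (EuclideanSpace.single 0 1) 1 - L (EuclideanSpace.single 1 1) 0 = 0

theorem isClosed_setOf_isDivCurlFree : IsClosed {L | IsDivCurlFree L} := by
  refine (isClosed_eq ?_ continuous_const).inter (isClosed_eq ?_ continuous_const) <;> fun_prop

namespace IsDivCurlFree

variable {L : E2 →L[ℝ] E2} (hL : IsDivCurlFree L)

include hL

theorem conjIso_apply_planeIso (w : ℂ) :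
    conjIso (L (planeIso w)) = w * conjIso (L (planeIso 1)) := by
  have hdiv : L (EuclideanSpace.single 1 1) 1 = -L (EuclideanSpace.single 0 1) 0 := by
    linarith [hL.1]
  have hcurl : L (EuclideanSpace.single 1 1) 0 = L (EuclideanSpace.single 0 1) 1 := by
    linarith [hL.2]
  rw [planeIso_eq w, planeIso_eq 1]
  apply Complex.ext
  · simp [conjIso_apply, hdiv, hcurl]
  · simp only [Fin.isValue, map_add, map_smul, conjIso_apply, hdiv, hcurl, neg_neg, Complex.one_re,
      one_smul, Complex.one_im, zero_smul, add_zero, Complex.add_im, Complex.smul_im, smul_eq_mul,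
      Complex.mul_im]

theorem norm_apply (v : E2) : ‖L v‖ = ‖v‖ * ‖L (planeIso 1)‖ := by
  obtain ⟨w, rfl⟩ := planeIso.surjective v
  rw [← conjIso.norm_map, hL.conjIso_apply_planeIso, norm_mul, conjIso.norm_map,
    planeIso.norm_map]

theorem norm_le_of_norm_apply_le {v : E2} (hv : v ≠ 0) {B : ℝ} (h : ‖L v‖ ≤ B * ‖v‖) :
    ‖L (planeIso 1)‖ ≤ B := by
  rw [hL.norm_apply, mul_comm] at h
  exact le_of_mul_le_mul_right h (norm_pos_iff.2 hv)

end IsDivCurlFree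

/-- The complex velocity `u₀ - i u₁` of a velocity field `u` on `Ω`, extended by zero so that it is
periodic on the whole plane when `u` is periodic on `Ω`. -/
def complexVelocity (Ω : Set E2) (u : E2 → E2) : ℂ → ℂ :=
  (planeIso ⁻¹' Ω).indicator fun w => conjIso (u (planeIso w))

section ComplexVelocity

variable {Ω : Set E2} {u : E2 → E2}

theorem periodic_planeIso_preimage (hper : ∀ x, x + transl ∈ Ω ↔ x ∈ Ω) :
    Function.Periodic (· ∈ planeIso ⁻¹' Ω) ((2 * Real.pi : ℝ) : ℂ) := fun w => by
  simp only [mem_preimage, map_add, planeIso_two_pi, hper]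

theorem periodic_complexVelocity (hperΩ : ∀ x, x + transl ∈ Ω ↔ x ∈ Ω)
    (hperu : ∀ x ∈ Ω, u (x + transl) = u x) :
    Function.Periodic (complexVelocity Ω u) ((2 * Real.pi : ℝ) : ℂ) := fun w => by
  have hmem := periodic_planeIso_preimage hperΩ w
  by_cases hw : w ∈ planeIso ⁻¹' Ω
  · rw [complexVelocity, indicator_of_mem (hmem.mpr hw), indicator_of_mem hw, map_add,
      planeIso_two_pi, hperu _ hw]
  · rw [complexVelocity, indicator_of_notMem (hw ∘ hmem.mp), indicator_of_notMem hw]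

theorem hasDerivAt_complexVelocity (hΩ : IsOpen Ω) {w : ℂ} (hw : planeIso w ∈ Ω)
    {L : E2 →L[ℝ] E2} (hL : IsDivCurlFree L) (hu : HasFDerivAt u L (planeIso w)) :
    HasDerivAt (complexVelocity Ω u) (conjIso (L (planeIso 1))) w := by
  have hderiv : HasDerivAt (fun w => conjIso (u (planeIso w))) (conjIso (L (planeIso 1))) w := by
    rw [hasDerivAt_iff_hasFDerivAt]
    refine hasFDerivAt_of_restrictScalars ℝ (conjIso.toContinuousLinearEquiv.hasFDerivAt.comp w
      (hu.comp w planeIso.toContinuousLinearEquiv.hasFDerivAt)) ?_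
    ext w
    exact (hL.conjIso_apply_planeIso w).symm
  refine hderiv.congr_of_eventuallyEq ?_
  filter_upwards [(hΩ.preimage planeIso.continuous).mem_nhds hw] with v hv
  exact indicator_of_mem hv _

theorem integrableOn_norm_sq_complexVelocity (hΩ : MeasurableSet Ω) {s : Set ℝ}
    (hs : MeasurableSet s) (hu : IntegrableOn (fun x => ‖u x‖ ^ 2) (Ω ∩ {x : E2 | x 0 ∈ s})) :
    IntegrableOn (fun w => ‖complexVelocity Ω u w‖ ^ 2) (planeIso ⁻¹' Ω ∩ {w | w.re ∈ s}) := by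
  have hmeas : MeasurableSet (Ω ∩ {x : E2 | x 0 ∈ s}) := hΩ.inter (hs.preimage (by fun_prop))
  have hpre : planeIso ⁻¹' (Ω ∩ {x : E2 | x 0 ∈ s}) = planeIso ⁻¹' Ω ∩ {w | w.re ∈ s} := by
    ext w
    simp only [preimage_inter, mem_inter_iff, mem_preimage, mem_ofPred_eq, planeIso_apply_zero]
  rw [← hpre]
  refine ((planeIso.measurePreserving.integrableOn_comp_preimage
    planeIso.toHomeomorph.measurableEmbedding).2 hu).congr_fun (fun w hw => ?_)
    (hmeas.preimage planeIso.continuous.measurable)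
  rw [complexVelocity, indicator_of_mem (show w ∈ planeIso ⁻¹' Ω from hw.1), conjIso.norm_map,
    Function.comp_apply]

theorem exists_isDivCurlFree_hasFDerivWithinAt_closure (hΩ : IsOpen Ω)
    (hu : ContDiffOn ℝ 1 u (closure Ω)) (hfree : ∀ x ∈ Ω, IsDivCurlFree (fderiv ℝ u x)) :
    ∃ G : E2 → E2 →L[ℝ] E2, ContinuousOn G (closure Ω) ∧ EqOn G (fderiv ℝ u) Ω ∧
      ∀ x ∈ closure Ω, IsDivCurlFree (G x) ∧ HasFDerivWithinAt u (G x) (closure Ω) x := by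
  obtain ⟨G, hGc, hGu, hG⟩ := exists_continuousOn_hasFDerivWithinAt_closure hΩ hu
  have hGfree : MapsTo G (closure Ω) {L | IsDivCurlFree L} := by
    rw [← isClosed_setOf_isDivCurlFree.closure_eq]
    exact MapsTo.closure_of_continuousOn (fun x hx => by simpa [hGu hx] using hfree x hx) hGc
  exact ⟨G, hGc, hGu, fun x hx => ⟨hGfree hx, hG x hx⟩⟩

theorem norm_fderiv_le_of_isDivCurlFree {a B : ℝ} (hΩ : IsOpen Ω)
    (hlow : {x : E2 | x 1 ≤ -a} ⊆ Ω) (hup : Ω ⊆ {x : E2 | x 1 ≤ a})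
    (hperΩ : ∀ x, x + transl ∈ Ω ↔ x ∈ Ω) (hperu : ∀ x ∈ Ω, u (x + transl) = u x)
    (hu : ContDiffOn ℝ 1 u (closure Ω)) (hfree : ∀ x ∈ Ω, IsDivCurlFree (fderiv ℝ u x))
    (hL2 : IntegrableOn (fun x => ‖u x‖ ^ 2) (Ω ∩ {x : E2 | x 0 ∈ Icc 0 (2 * Real.pi)}))
    (hB0 : 0 < B) (hB : ∀ x ∈ frontier Ω, ∃ v ≠ 0, ∀ L : E2 →L[ℝ] E2,
      HasFDerivWithinAt u L (closure Ω) x → ‖L v‖ ≤ B * ‖v‖) {x : E2} (hx : x ∈ Ω) :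
    ‖fderiv ℝ u x‖ ≤ B := by
  obtain ⟨G, hGc, hGu, hG⟩ := exists_isDivCurlFree_hasFDerivWithinAt_closure hΩ hu hfree
  have hderiv : ∀ w ∈ planeIso ⁻¹' Ω, HasDerivAt (complexVelocity Ω u)
      (conjIso (G (planeIso w) (planeIso 1))) w := fun w hw => by
    have hmem := subset_closure (show planeIso w ∈ Ω from hw)
    exact hasDerivAt_complexVelocity hΩ hw (hG _ hmem).1
      ((hG _ hmem).2.hasFDerivAt (mem_of_superset (hΩ.mem_nhds hw) subset_closure))
  have hcl : closure (planeIso ⁻¹' Ω) = planeIso ⁻¹' closure Ω :=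
    (planeIso.toHomeomorph.preimage_closure Ω).symm
  have hfr : frontier (planeIso ⁻¹' Ω) = planeIso ⁻¹' frontier Ω :=
    (planeIso.toHomeomorph.preimage_frontier Ω).symm
  have hfrontier : ∀ w ∈ frontier (planeIso ⁻¹' Ω),
      ‖conjIso (G (planeIso w) (planeIso 1))‖ ≤ B := fun w hw => by
    rw [hfr] at hw
    obtain ⟨v, hv, hvB⟩ := hB _ hw
    have hmem := frontier_subset_closure hw
    rw [conjIso.norm_map]
    exact (hG _ hmem).1.norm_le_of_norm_apply_le hv (hvB _ (hG _ hmem).2)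
  have hbound := norm_le_of_periodic_of_norm_le_frontier Real.two_pi_pos
    (hΩ.preimage planeIso.continuous) (periodic_planeIso_preimage hperΩ)
    (fun w hw => hlow (by simpa [planeIso_apply_one] using hw))
    (fun w hw => by simpa [planeIso_apply_one] using hup hw)
    (periodic_complexVelocity hperΩ hperu)
    (fun w hw => (hderiv w hw).differentiableAt.differentiableWithinAt)
    (integrableOn_norm_sq_complexVelocity hΩ.measurableSet measurableSet_Icc hL2)
    (hcl ▸ conjIso.continuous.comp_continuousOn ((hGc.clm_apply continuousOn_const).comp
      planeIso.continuous.continuousOn fun w hw => hw))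
    (fun w hw => (hderiv w hw).deriv.symm) hB0 hfrontier
  obtain ⟨w, rfl⟩ := planeIso.surjective x
  refine ContinuousLinearMap.opNorm_le_bound _ hB0.le fun v => ?_
  have hw := hbound w (subset_closure hx)
  rw [conjIso.norm_map, hGu hx] at hw
  rw [(hfree _ hx).norm_apply, mul_comm]
  gcongr

end ComplexVelocity

/-! ### Injectivity of a curve bounding two unbounded domains -/

/-- The Cauchy integral `∫ dζ / (ζ - p)` along the arc `ζ|[a,b]`; for a closed arc it is `2πi` times
the winding number of `ζ` around `p`. -/
def cauchyIntegral (ζ : ℝ → ℂ) (a b : ℝ) (p : ℂ) : ℂ :=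
  ∫ τ in a..b, deriv ζ τ / (ζ τ - p)

section CauchyIntegral

variable {ζ : ℝ → ℂ} {a b : ℝ} {p : ℂ}

theorem intervalIntegrable_deriv_div_sub (hζ : ContDiff ℝ 1 ζ) (hp : ∀ τ ∈ uIcc a b, ζ τ ≠ p) :
    IntervalIntegrable (fun τ => deriv ζ τ / (ζ τ - p)) volume a b :=
  ((hζ.continuous_deriv le_rfl).continuousOn.div (hζ.continuous.sub continuous_const).continuousOn
    fun τ hτ => sub_ne_zero.2 (hp τ hτ)).intervalIntegrable

theorem hasDerivAt_log_div {f g : ℝ → ℂ} {f' g' : ℂ} {τ : ℝ} (hf : HasDerivAt f f' τ)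
    (hg : HasDerivAt g g' τ) (hf0 : f τ ≠ 0) (hg0 : g τ ≠ 0)
    (h : f τ / g τ ∈ Complex.slitPlane) :
    HasDerivAt (fun s => Complex.log (f s / g s)) (f' / f τ - g' / g τ) τ := by
  convert! (hf.fun_div hg hg0).clog_real h using 1
  field_simp

/-- For `q` close to `p` the integrand of the difference has the single-valued primitive
`log ((ζ - q) / (ζ - p))`. -/
theorem eventually_cauchyIntegral_eq (hζ : ContDiff ℝ 1 ζ) (hloop : ζ a = ζ b)
    (hp : ∀ τ ∈ uIcc a b, ζ τ ≠ p) :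
    ∀ᶠ q in 𝓝 p, cauchyIntegral ζ a b q = cauchyIntegral ζ a b p := by
  have hclose : ∀ᶠ q in 𝓝 p, ∀ τ ∈ uIcc a b, ‖p - q‖ < ‖ζ τ - p‖ := by
    refine isCompact_uIcc.eventually_forall_of_forall_eventually fun τ hτ => ?_
    have hc : Continuous fun x : ℂ × ℝ => ‖ζ x.2 - p‖ - ‖p - x.1‖ := by
      have := hζ.continuous
      fun_prop
    refine (hc.continuousAt.eventually (lt_mem_nhds (a := 0) ?_)).mono fun x hx => sub_pos.1 hx
    simpa [sub_ne_zero] using hp τ hτ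
  filter_upwards [hclose] with q hq
  have hne : ∀ τ ∈ uIcc a b, ζ τ ≠ q := by
    rintro τ hτ rfl
    exact (hq τ hτ).ne (norm_sub_rev _ _)
  have hslit : ∀ τ ∈ uIcc a b, (ζ τ - q) / (ζ τ - p) ∈ Complex.slitPlane := fun τ hτ => by
    have hp0 := sub_ne_zero.2 (hp τ hτ)
    have : (ζ τ - q) / (ζ τ - p) = 1 + (p - q) / (ζ τ - p) := by
      field_simp
      ring
    rw [this]
    refine Complex.mem_slitPlane_of_norm_lt_one ?_
    rw [norm_div, div_lt_one (norm_pos_iff.2 hp0)]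
    exact hq τ hτ
  have hderiv := fun τ => ((hζ.differentiable one_ne_zero) τ).hasDerivAt
  have hint := (intervalIntegrable_deriv_div_sub hζ hne).sub
    (intervalIntegrable_deriv_div_sub hζ hp)
  rw [← sub_eq_zero, cauchyIntegral, cauchyIntegral, ← intervalIntegral.integral_sub
    (intervalIntegrable_deriv_div_sub hζ hne) (intervalIntegrable_deriv_div_sub hζ hp),
    intervalIntegral.integral_eq_sub_of_hasDerivAt (fun τ hτ => hasDerivAt_log_div
      ((hderiv τ).sub_const q) ((hderiv τ).sub_const p) (sub_ne_zero.2 (hne τ hτ))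
      (sub_ne_zero.2 (hp τ hτ)) (hslit τ hτ)) hint, hloop, sub_self]

theorem tendsto_cauchyIntegral_cobounded (hζ : ContDiff ℝ 1 ζ) :
    Tendsto (cauchyIntegral ζ a b) (Bornology.cobounded ℂ) (𝓝 0) := by
  obtain ⟨M, hM⟩ := isCompact_uIcc.exists_bound_of_continuousOn
    ((hζ.continuous_deriv le_rfl).continuousOn (s := uIcc a b))
  obtain ⟨R, hR⟩ := isCompact_uIcc.exists_bound_of_continuousOn
    (hζ.continuous.continuousOn (s := uIcc a b))
  have hM0 : 0 ≤ M := (norm_nonneg _).trans (hM a left_mem_uIcc)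
  have hlim : Tendsto (fun p : ℂ => M / (‖p‖ - R) * |b - a|) (Bornology.cobounded ℂ) (𝓝 0) := by
    have := (tendsto_atTop_add_const_right _ (-R) (tendsto_norm_cobounded_atTop (E := ℂ)))
    simpa [← sub_eq_add_neg] using (this.const_div_atTop M).mul_const |b - a|
  refine squeeze_zero_norm' ?_ hlim
  filter_upwards [tendsto_norm_cobounded_atTop.eventually_gt_atTop R] with p hp
  refine intervalIntegral.norm_integral_le_of_norm_le_const fun τ hτ => ?_
  have hτ' := uIoc_subset_uIcc hτ
  have hsub : ‖p‖ - R ≤ ‖ζ τ - p‖ := by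
    rw [norm_sub_rev]
    linarith [norm_sub_norm_le p (ζ τ), hR τ hτ']
  rw [norm_div]
  exact div_le_div₀ hM0 (hM τ hτ') (sub_pos.2 hp) hsub

theorem cauchyIntegral_eq_zero_of_mem_unbounded (hζ : ContDiff ℝ 1 ζ) (hloop : ζ a = ζ b)
    {U : Set ℂ} (hU : IsOpen U) (hconn : IsPreconnected U) (hunb : ¬ Bornology.IsBounded U)
    (havoid : ∀ τ ∈ uIcc a b, ζ τ ∉ U) (hp : p ∈ U) : cauchyIntegral ζ a b p = 0 := by
  have hder : ∀ q ∈ U, HasDerivAt (cauchyIntegral ζ a b) 0 q := fun q hq =>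
    (hasDerivAt_const q (cauchyIntegral ζ a b q)).congr_of_eventuallyEq
      (eventually_cauchyIntegral_eq hζ hloop fun τ hτ h => havoid τ hτ (h ▸ hq))
  by_contra hne
  refine hunb (Bornology.isBounded_def.2 ?_)
  filter_upwards [(tendsto_cauchyIntegral_cobounded hζ).eventually_ne (Ne.symm hne)] with q hq hqU
  exact hq (hU.is_const_of_deriv_eq_zero hconn
    (fun x hx => (hder x hx).differentiableAt.differentiableWithinAt)
    (fun x hx => (hder x hx).deriv) hqU hp)

theorem cauchyIntegral_eq_zero_of_dense (hζ : ContDiff ℝ 1 ζ) (hloop : ζ a = ζ b) {S : Set ℂ}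
    (hS : Dense S) (hzero : ∀ q ∈ S, cauchyIntegral ζ a b q = 0)
    (hp : ∀ τ ∈ uIcc a b, ζ τ ≠ p) : cauchyIntegral ζ a b p = 0 := by
  obtain ⟨q, hq, hqS⟩ := hS.inter_nhds_nonempty (eventually_cauchyIntegral_eq hζ hloop hp)
  exact hqS ▸ hzero q hq

end CauchyIntegral

section Jump

theorem sq_add_sq_ne_zero_and_le_re_div {w y : ℂ} {s ε : ℝ} (hε : 0 < ε)
    (hw : ‖w - 1‖ ≤ 1 / 10) (hy : ‖y - s‖ ≤ 1 / 10 * |s|) :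
    y ^ 2 + (ε : ℂ) ^ 2 ≠ 0 ∧
      ε / (2 * (s ^ 2 + ε ^ 2)) ≤ (ε * w / (y ^ 2 + (ε : ℂ) ^ 2)).re := by
  set N : ℝ := s ^ 2 + ε ^ 2 with hN
  set D : ℂ := y ^ 2 + (ε : ℂ) ^ 2 with hD
  have hNpos : 0 < N := by positivity
  have hDN : ‖D - N‖ ≤ 21 / 100 * N := by
    have hsplit : D - N = (y - s) * (y - s) + 2 * s * (y - s) := by
      rw [hD, hN]
      push_cast
      ring
    calc ‖D - N‖ ≤ ‖y - s‖ * ‖y - s‖ + 2 * |s| * ‖y - s‖ := by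
          rw [hsplit]
          refine (norm_add_le _ _).trans_eq ?_
          simp only [norm_mul, Complex.norm_real, Real.norm_eq_abs, Complex.norm_ofNat]
      _ ≤ 1 / 10 * |s| * (1 / 10 * |s|) + 2 * |s| * (1 / 10 * |s|) := by gcongr
      _ = 21 / 100 * s ^ 2 := by rw [← sq_abs s]; ring
      _ ≤ 21 / 100 * N := by rw [hN]; gcongr; exact le_add_of_nonneg_right (sq_nonneg ε)
  have hDlow : 79 / 100 * N ≤ ‖D‖ := by
    have := norm_sub_norm_le (N : ℂ) D
    rw [norm_sub_rev, Complex.norm_real, Real.norm_of_nonneg hNpos.le] at this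
    linarith
  have hD0 : D ≠ 0 := norm_pos_iff.1 ((by positivity : 0 < 79 / 100 * N).trans_le hDlow)
  have hrest : ‖(w * N - D) / D‖ ≤ 1 / 2 := by
    have : ‖w * N - D‖ ≤ 31 / 100 * N := by
      have hsplit : w * N - D = (w - 1) * N - (D - N) := by ring
      rw [hsplit]
      refine (norm_sub_le _ _).trans ?_
      rw [norm_mul, Complex.norm_real, Real.norm_of_nonneg hNpos.le]
      nlinarith
    rw [norm_div, div_le_iff₀ (norm_pos_iff.2 hD0)]
    linarith
  have hfactor : (ε * w / D : ℂ) = ((ε / N : ℝ) : ℂ) * (1 + (w * N - D) / D) := by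
    have : (N : ℂ) ≠ 0 := Complex.ofReal_ne_zero.2 hNpos.ne'
    push_cast
    field_simp
    ring
  refine ⟨hD0, ?_⟩
  rw [hfactor, Complex.re_ofReal_mul, Complex.add_re, Complex.one_re]
  have hre := (abs_le.1 ((Complex.abs_re_le_norm _).trans hrest)).1
  calc ε / (2 * N) = ε / N * (1 / 2) := by field_simp
    _ ≤ _ := by gcongr; linarith

variable {y : ℝ → ℂ} {γ : ℝ}

theorem exists_le_re_div_sq_add_sq (hy : ContDiff ℝ 1 y) (hy0 : y γ = 0) (hy1 : deriv y γ = 1) :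
    ∃ r > 0, ∀ τ, |τ - γ| < r → ∀ ε : ℝ, 0 < ε → y τ ^ 2 + (ε : ℂ) ^ 2 ≠ 0 ∧
      ε / (2 * ((τ - γ) ^ 2 + ε ^ 2)) ≤ (ε * deriv y τ / (y τ ^ 2 + (ε : ℂ) ^ 2)).re := by
  have hderiv : ∀ᶠ τ in 𝓝 γ, ‖deriv y τ - 1‖ < 1 / 10 := by
    have := (hy.continuous_deriv le_rfl).tendsto γ
    rw [hy1] at this
    simpa only [dist_eq_norm] using this.eventually (ball_mem_nhds 1 (by norm_num))
  have hlin := (hy.differentiable one_ne_zero γ).hasDerivAt.isLittleO.bound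
    (by norm_num : (0 : ℝ) < 1 / 10)
  obtain ⟨r, hr, hball⟩ := Metric.eventually_nhds_iff.1 (hderiv.and hlin)
  refine ⟨r, hr, fun τ hτ ε hε => ?_⟩
  obtain ⟨hw, hyτ⟩ := hball (show dist τ γ < r from hτ)
  refine sq_add_sq_ne_zero_and_le_re_div hε hw.le ?_
  simpa [hy0, hy1] using hyτ

theorem eventually_norm_div_sq_add_sq_lt (hy : ContDiff ℝ 1 y) {K : Set ℝ} (hK : IsCompact K)
    (hy0 : ∀ τ ∈ K, y τ ≠ 0) {η : ℝ} (hη : 0 < η) :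
    ∀ᶠ ε : ℝ in 𝓝 0, ∀ τ ∈ K, y τ ^ 2 + (ε : ℂ) ^ 2 ≠ 0 ∧
      ‖ε * deriv y τ / (y τ ^ 2 + (ε : ℂ) ^ 2)‖ < η := by
  refine hK.eventually_forall_of_forall_eventually fun τ hτ => ?_
  have hyc := hy.continuous
  have hden : Continuous fun x : ℝ × ℝ => y x.2 ^ 2 + (x.1 : ℂ) ^ 2 := by fun_prop
  have hnum : Continuous fun x : ℝ × ℝ => (x.1 : ℂ) * deriv y x.2 :=
    (Complex.continuous_ofReal.comp continuous_fst).mul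
      ((hy.continuous_deriv le_rfl).comp continuous_snd)
  have hne : y τ ^ 2 + ((0 : ℝ) : ℂ) ^ 2 ≠ 0 := by simpa using hy0 τ hτ
  refine (hden.continuousAt.eventually_ne hne).and ?_
  refine (hnum.continuousAt.div hden.continuousAt hne).norm.eventually (gt_mem_nhds ?_)
  simpa using hη

theorem mul_sub_mul_le_integral {f : ℝ → ℝ} {a b c d m η : ℝ} (hac : a ≤ c) (hcd : c ≤ d)
    (hdb : d ≤ b) (hη : 0 ≤ η) (hf : ContinuousOn f (Icc a b)) (hlow : ∀ x ∈ Icc a b, -η ≤ f x)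
    (hmid : ∀ x ∈ Icc c d, m ≤ f x) : m * (d - c) - η * (b - a) ≤ ∫ x in a..b, f x := by
  have hint : ∀ {x y}, a ≤ x → x ≤ y → y ≤ b → IntervalIntegrable f volume x y :=
    fun hx hxy hy =>
      (hf.mono ((uIcc_of_le hxy).trans_subset (Icc_subset_Icc hx hy))).intervalIntegrable
  have hleft := hint le_rfl hac (hcd.trans hdb)
  have hmiddle := hint hac hcd hdb
  have hright := hint (hac.trans hcd) hdb le_rfl
  have hbelow : ∀ {x y k}, x ≤ y → IntervalIntegrable f volume x y → (∀ τ ∈ Icc x y, k ≤ f τ) →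
      k * (y - x) ≤ ∫ τ in x..y, f τ := fun {x y k} hxy hi hk => by
    simpa [mul_comm] using intervalIntegral.integral_mono_on hxy intervalIntegrable_const hi hk
  have h1 := hbelow hac hleft fun τ hτ => hlow τ ⟨hτ.1, hτ.2.trans (hcd.trans hdb)⟩
  have h2 := hbelow hcd hmiddle hmid
  have h3 := hbelow hdb hright fun τ hτ => hlow τ ⟨(hac.trans hcd).trans hτ.1, hτ.2⟩
  rw [← intervalIntegral.integral_add_adjacent_intervals hleft (hmiddle.trans hright),
    ← intervalIntegral.integral_add_adjacent_intervals hmiddle hright]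
  nlinarith [mul_nonneg hη (sub_nonneg.2 hcd)]

/-- Near `γ` the kernel is of size `ε / ((τ - γ)² + ε²)`, an approximate identity; elsewhere it is
uniformly small. -/
theorem eventually_le_re_div_sq_add_sq (hy : ContDiff ℝ 1 y) {a b : ℝ} (hγ : γ ∈ Icc a b)
    (hy0 : ∀ τ ∈ Icc a b, y τ = 0 ↔ τ = γ) (hy1 : deriv y γ = 1) {η : ℝ} (hη : 0 < η) :
    ∀ᶠ ε : ℝ in 𝓝[>] 0,
      (∀ τ ∈ Icc a b, y τ ^ 2 + (ε : ℂ) ^ 2 ≠ 0 ∧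
        -η ≤ (ε * deriv y τ / (y τ ^ 2 + (ε : ℂ) ^ 2)).re) ∧
      ∀ τ ∈ Icc (γ - ε) (γ + ε),
        1 / (4 * ε) ≤ (ε * deriv y τ / (y τ ^ 2 + (ε : ℂ) ^ 2)).re := by
  obtain ⟨r, hr, hnear⟩ := exists_le_re_div_sq_add_sq hy ((hy0 γ hγ).2 rfl) hy1
  have hfar := eventually_norm_div_sq_add_sq_lt hy
    (isCompact_Icc.diff isOpen_ball : IsCompact (Icc a b \ ball γ r))
    (fun τ hτ h => hτ.2 ((hy0 τ hτ.1).1 h ▸ mem_ball_self hr)) hη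
  filter_upwards [nhdsWithin_le_nhds hfar, nhdsWithin_le_nhds (gt_mem_nhds hr),
    self_mem_nhdsWithin] with ε hfarε hεr (hε : 0 < ε)
  refine ⟨fun τ hτ => ?_, fun τ hτ => ?_⟩
  · by_cases h : τ ∈ ball γ r
    · obtain ⟨hne, hre⟩ := hnear τ h ε hε
      exact ⟨hne, (neg_nonpos.2 hη.le).trans (le_trans (by positivity) hre)⟩
    · obtain ⟨hne, hnorm⟩ := hfarε τ ⟨hτ, h⟩
      exact ⟨hne, (abs_le.1 ((Complex.abs_re_le_norm _).trans hnorm.le)).1⟩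
  · have hτε : |τ - γ| ≤ ε := abs_le.2 ⟨by linarith [hτ.1], by linarith [hτ.2]⟩
    have hsq : (τ - γ) ^ 2 ≤ ε ^ 2 := sq_le_sq.2 (by rwa [abs_of_pos hε])
    refine le_trans ?_ (hnear τ (hτε.trans_lt hεr) ε hε).2
    calc 1 / (4 * ε) = ε / (2 * (ε ^ 2 + ε ^ 2)) := by field_simp; norm_num
      _ ≤ ε / (2 * ((τ - γ) ^ 2 + ε ^ 2)) := by gcongr

theorem exists_integral_div_sq_add_sq_ne_zero (hy : ContDiff ℝ 1 y) {a b : ℝ} (ha : a < γ)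
    (hb : γ < b) (hy0 : ∀ τ ∈ Icc a b, y τ = 0 ↔ τ = γ) (hy1 : deriv y γ = 1) :
    ∃ ε : ℝ, (∀ τ ∈ Icc a b, y τ ^ 2 + (ε : ℂ) ^ 2 ≠ 0) ∧
      ∫ τ in a..b, ε * deriv y τ / (y τ ^ 2 + (ε : ℂ) ^ 2) ≠ 0 := by
  have hab : 0 < b - a := sub_pos.2 (ha.trans hb)
  have hη : 0 < 1 / (4 * (b - a)) := by positivity
  have hinside : ∀ᶠ ε : ℝ in 𝓝[>] 0, a < γ - ε ∧ γ + ε < b := by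
    filter_upwards [nhdsWithin_le_nhds (gt_mem_nhds (sub_pos.2 ha)),
      nhdsWithin_le_nhds (gt_mem_nhds (sub_pos.2 hb))] with ε h1 h2
    exact ⟨lt_sub_comm.1 h1, lt_sub_iff_add_lt'.1 h2⟩
  obtain ⟨ε, ⟨⟨hall, hmid⟩, hεa, hεb⟩, hε : 0 < ε⟩ :=
    (((eventually_le_re_div_sq_add_sq hy ⟨ha.le, hb.le⟩ hy0 hy1 hη).and hinside).and
      self_mem_nhdsWithin).exists
  have hcont : ContinuousOn (fun τ => ε * deriv y τ / (y τ ^ 2 + (ε : ℂ) ^ 2)) (Icc a b) :=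
    (continuousOn_const.mul (hy.continuous_deriv le_rfl).continuousOn).div
      ((hy.continuous.continuousOn.pow 2).add continuousOn_const) fun τ hτ => (hall τ hτ).1
  refine ⟨ε, fun τ hτ => (hall τ hτ).1, fun hzero => ?_⟩
  have hre_zero : ∫ τ in a..b, (ε * deriv y τ / (y τ ^ 2 + (ε : ℂ) ^ 2)).re = 0 := by
    have := Complex.reCLM.intervalIntegral_comp_comm (μ := volume)
      (hcont.mono (uIcc_of_le (ha.trans hb).le).subset).intervalIntegrable
    rwa [hzero, map_zero] at this
  have hre_low := mul_sub_mul_le_integral hεa.le (by linarith : γ - ε ≤ γ + ε) hεb.le hη.le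
    (Complex.continuous_re.comp_continuousOn hcont) (fun τ hτ => (hall τ hτ).2) hmid
  have hmain : 1 / (4 * ε) * (γ + ε - (γ - ε)) = 1 / 2 := by field_simp; ring
  have herror : 1 / (4 * (b - a)) * (b - a) = 1 / 4 := by field_simp
  rw [hmain, herror, Function.comp_def, hre_zero] at hre_low
  norm_num at hre_low

end Jump

section ClosedLoop

variable {ζ : ℝ → ℂ} {a b : ℝ}

theorem sub_mul_sub_eq_sq_mul (w c : ℂ) {v : ℂ} (hv : v ≠ 0) (ε : ℂ) :
    (w - (c + Complex.I * ε * v)) * (w - (c - Complex.I * ε * v)) =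
      v ^ 2 * (((w - c) / v) ^ 2 + ε ^ 2) := by
  field_simp
  linear_combination -(ε ^ 2 * v ^ 2) * Complex.I_sq

theorem cauchyIntegral_sub_cauchyIntegral (hζ : ContDiff ℝ 1 ζ) (c : ℂ) {v : ℂ} (hv : v ≠ 0) (ε : ℂ)
    (h : ∀ τ ∈ uIcc a b, ((ζ τ - c) / v) ^ 2 + ε ^ 2 ≠ 0) :
    cauchyIntegral ζ a b (c + Complex.I * ε * v) - cauchyIntegral ζ a b (c - Complex.I * ε * v) =
      2 * Complex.I *
        ∫ τ in a..b, ε * deriv (fun s => (ζ s - c) / v) τ / (((ζ τ - c) / v) ^ 2 + ε ^ 2) := by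
  have hprod : ∀ τ ∈ uIcc a b,
      (ζ τ - (c + Complex.I * ε * v)) * (ζ τ - (c - Complex.I * ε * v)) ≠ 0 := fun τ hτ => by
    rw [sub_mul_sub_eq_sq_mul _ _ hv]
    exact mul_ne_zero (pow_ne_zero 2 hv) (h τ hτ)
  rw [cauchyIntegral, cauchyIntegral, ← intervalIntegral.integral_sub
    (intervalIntegrable_deriv_div_sub hζ fun τ hτ =>
      sub_ne_zero.1 (left_ne_zero_of_mul (hprod τ hτ)))
    (intervalIntegrable_deriv_div_sub hζ fun τ hτ =>
      sub_ne_zero.1 (right_ne_zero_of_mul (hprod τ hτ))),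
    ← intervalIntegral.integral_const_mul]
  refine intervalIntegral.integral_congr fun τ hτ => ?_
  have hne := h τ hτ
  rw [deriv_div_const, deriv_sub_const, div_sub_div _ _ (left_ne_zero_of_mul (hprod τ hτ))
    (right_ne_zero_of_mul (hprod τ hτ)), sub_mul_sub_eq_sq_mul _ _ hv, eq_comm, ← mul_div_assoc,
    div_eq_div_iff hne (mul_ne_zero (pow_ne_zero 2 hv) hne)]
  field_simp
  ring

/-- The Cauchy integral jumps by `2πi` across a simple closed loop, while it vanishes on each
unbounded component of the complement. -/
theorem not_dense_union_of_simple_closed_loop (hζ : ContDiff ℝ 1 ζ) (hreg : ∀ τ, deriv ζ τ ≠ 0)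
    (hab : a < b) (hloop : ζ a = ζ b)
    (hsimple : ∀ s ∈ Icc a b, ∀ t ∈ Icc a b, s < t → ζ s = ζ t → s = a ∧ t = b)
    {U V : Set ℂ} (hU : IsOpen U) (hV : IsOpen V) (hUconn : IsPreconnected U)
    (hVconn : IsPreconnected V) (hUunb : ¬ Bornology.IsBounded U)
    (hVunb : ¬ Bornology.IsBounded V) (hζU : ∀ τ, ζ τ ∉ U) (hζV : ∀ τ, ζ τ ∉ V) :
    ¬ Dense (U ∪ V) := by
  intro hdense
  have huIcc : uIcc a b = Icc a b := uIcc_of_le hab.le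
  have hzero : ∀ p, (∀ τ ∈ uIcc a b, ζ τ ≠ p) → cauchyIntegral ζ a b p = 0 := fun p hp =>
    cauchyIntegral_eq_zero_of_dense hζ hloop hdense (fun q hq => hq.elim
      (cauchyIntegral_eq_zero_of_mem_unbounded hζ hloop hU hUconn hUunb fun τ _ => hζU τ)
      (cauchyIntegral_eq_zero_of_mem_unbounded hζ hloop hV hVconn hVunb fun τ _ => hζV τ)) hp
  obtain ⟨γ, haγ, hγb⟩ := exists_between hab
  have honly : ∀ τ ∈ Icc a b, (ζ τ - ζ γ) / deriv ζ γ = 0 ↔ τ = γ := fun τ hτ => by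
    rw [div_eq_zero_iff, or_iff_left (hreg γ), sub_eq_zero]
    refine ⟨fun h => ?_, fun h => h ▸ rfl⟩
    rcases lt_trichotomy τ γ with hlt | heq | hgt
    · exact absurd (hsimple τ hτ γ ⟨haγ.le, hγb.le⟩ hlt h).2 hγb.ne
    · exact heq
    · exact absurd (hsimple γ ⟨haγ.le, hγb.le⟩ τ hτ hgt h.symm).1 haγ.ne'
  obtain ⟨ε, hne, hint⟩ := exists_integral_div_sq_add_sq_ne_zero
    (y := fun τ => (ζ τ - ζ γ) / deriv ζ γ) ((hζ.sub contDiff_const).div_const _) haγ hγb honly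
    (by rw [deriv_div_const, deriv_sub_const, div_self (hreg γ)])
  rw [← huIcc] at hne
  have hoff : ∀ τ ∈ uIcc a b, (ζ τ - (ζ γ + Complex.I * ε * deriv ζ γ)) *
      (ζ τ - (ζ γ - Complex.I * ε * deriv ζ γ)) ≠ 0 := fun τ hτ =>
    (sub_mul_sub_eq_sq_mul (ζ τ) (ζ γ) (hreg γ) ε).trans_ne
      (mul_ne_zero (pow_ne_zero 2 (hreg γ)) (hne τ hτ))
  have hjump := cauchyIntegral_sub_cauchyIntegral hζ (ζ γ) (hreg γ) ε hne
  rw [hzero _ fun τ hτ => sub_ne_zero.1 (left_ne_zero_of_mul (hoff τ hτ)),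
    hzero _ fun τ hτ => sub_ne_zero.1 (right_ne_zero_of_mul (hoff τ hτ)), sub_zero,
    eq_comm] at hjump
  exact (mul_ne_zero (mul_ne_zero two_ne_zero Complex.I_ne_zero) hint) hjump

end ClosedLoop

section SimpleSubloop

theorem eventually_eq_imp_eq_of_hasStrictDerivAt {E : Type*} [NormedAddCommGroup E]
    [NormedSpace ℝ E] {f : ℝ → E} {f' : E} {x : ℝ} (hf : HasStrictDerivAt f f' x) (hf' : f' ≠ 0) :
    ∀ᶠ p : ℝ × ℝ in 𝓝 (x, x), f p.1 = f p.2 → p.1 = p.2 := by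
  have hbound := hf.isLittleO.def (half_pos (norm_pos_iff.2 hf'))
  filter_upwards [hbound] with p hp heq
  rw [heq, sub_self, zero_sub, norm_neg] at hp
  simp only [ContinuousLinearMap.toSpanSingleton_apply, norm_smul] at hp
  by_contra hne
  have := mul_pos (norm_pos_iff.2 (sub_ne_zero.2 hne)) (norm_pos_iff.2 hf')
  linarith

/-- A loop of minimal parameter length is simple; local injectivity keeps the minimum off the
diagonal. -/
theorem exists_simple_subloop {X : Type*} [TopologicalSpace X] [T2Space X] {f : ℝ → X}
    (hf : Continuous f)
    (hinj : ∀ x, ∀ᶠ p : ℝ × ℝ in 𝓝 (x, x), f p.1 = f p.2 → p.1 = p.2) {a b : ℝ} (hab : a < b)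
    (hloop : f a = f b) :
    ∃ c d, c < d ∧ f c = f d ∧
      ∀ s ∈ Icc c d, ∀ t ∈ Icc c d, s < t → f s = f t → s = c ∧ t = d := by
  set N : Set (ℝ × ℝ) := {p | f p.1 = f p.2 → p.1 = p.2}
  set K : Set (ℝ × ℝ) := (Icc a b ×ˢ Icc a b ∩ {p | p.1 ≤ p.2 ∧ f p.1 = f p.2}) \ interior N
  have hmem : ∀ s ∈ Icc a b, ∀ t ∈ Icc a b, s < t → f s = f t → (s, t) ∈ K :=
    fun s hs t ht hst h => ⟨⟨⟨hs, ht⟩, hst.le, h⟩, fun hN => hst.ne (interior_subset hN h)⟩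
  have hK : IsCompact K := by
    refine ((isCompact_Icc.prod isCompact_Icc).inter_right ?_).diff isOpen_interior
    exact (isClosed_le continuous_fst continuous_snd).inter
      (isClosed_eq (hf.comp continuous_fst) (hf.comp continuous_snd))
  obtain ⟨⟨c, d⟩, ⟨⟨⟨hc, hd⟩, hcd, hfcd⟩, hN⟩, hmin⟩ := hK.exists_isMinOn
    ⟨_, hmem a (left_mem_Icc.2 hab.le) b (right_mem_Icc.2 hab.le) hab hloop⟩
    (continuous_snd.sub continuous_fst).continuousOn
  have hlt : c < d := lt_of_le_of_ne hcd fun h => hN (h ▸ mem_interior_iff_mem_nhds.2 (hinj c))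
  refine ⟨c, d, hlt, hfcd, fun s hs t ht hst h => ?_⟩
  have hle : d - c ≤ t - s := hmin (hmem s ⟨hc.1.trans hs.1, hs.2.trans hd.2⟩ t
    ⟨hc.1.trans ht.1, ht.2.trans hd.2⟩ hst h)
  constructor <;> linarith [hs.1, ht.2]

end SimpleSubloop

theorem dense_union_compl_closure {X : Type*} [TopologicalSpace X] {s : Set X} (hs : IsOpen s) :
    Dense (s ∪ (closure s)ᶜ) := by
  have : s ∪ (closure s)ᶜ = (frontier s)ᶜ := by
    rw [hs.frontier_eq, sdiff_eq, compl_inter, compl_compl, union_comm]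
  rw [this, ← interior_eq_empty_iff_dense_compl, ← frontier_compl,
    interior_frontier hs.isClosed_compl]

theorem injective_of_range_subset_frontier {z : ℝ → E2} (hz : ContDiff ℝ 1 z)
    (hreg : ∀ α, deriv z α ≠ 0) {Ω : Set E2} (hΩ : IsOpen Ω) (hconn : IsPreconnected Ω)
    (hconn' : IsPreconnected (closure Ω)ᶜ) (hunb : ¬ Bornology.IsBounded Ω)
    (hunb' : ¬ Bornology.IsBounded (closure Ω)ᶜ) (hfront : range z ⊆ frontier Ω) :
    Function.Injective z := by
  set ζ : ℝ → ℂ := fun α => planeIso.symm (z α)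
  have hζ : ContDiff ℝ 1 ζ := planeIso.symm.contDiff.comp hz
  have hζ' : ∀ α, deriv ζ α ≠ 0 := fun α => by
    have hd := ((hz.differentiable one_ne_zero) α).hasDerivAt
    have := (planeIso.symm.toContinuousLinearEquiv.hasFDerivAt (x := z α)).comp_hasDerivAt α hd
    rw [show deriv ζ α = planeIso.symm (deriv z α) from this.deriv]
    simpa using hreg α
  have hpre_unb : ∀ {s : Set E2}, ¬ Bornology.IsBounded s →
      ¬ Bornology.IsBounded (planeIso ⁻¹' s) :=
    fun {s} hs h => hs (by
      rw [← image_preimage_eq s planeIso.surjective]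
      exact planeIso.lipschitz.isBounded_image h)
  have hpre_conn : ∀ {s : Set E2}, IsPreconnected s → IsPreconnected (planeIso ⁻¹' s) :=
    planeIso.toHomeomorph.isPreconnected_preimage.2
  refine Function.Injective.of_lt_imp_ne fun a b hab hloop => ?_
  obtain ⟨c, d, hcd, hcloop, hsimple⟩ := exists_simple_subloop hζ.continuous
    (fun x => eventually_eq_imp_eq_of_hasStrictDerivAt
      (hζ.contDiffAt.hasStrictDerivAt one_ne_zero) (hζ' x)) hab
    (congrArg planeIso.symm hloop)
  have hmem : ∀ α, z α ∈ closure Ω \ Ω := fun α => hΩ.frontier_eq ▸ hfront (mem_range_self α)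
  refine not_dense_union_of_simple_closed_loop hζ hζ' hcd hcloop hsimple
    (hΩ.preimage planeIso.continuous) (isClosed_closure.isOpen_compl.preimage planeIso.continuous)
    (hpre_conn hconn) (hpre_conn hconn') (hpre_unb hunb) (hpre_unb hunb')
    (fun τ h => (hmem τ).2 (by simpa [ζ] using h))
    (fun τ h => h (by simpa [ζ] using (hmem τ).1)) ?_
  exact (dense_union_compl_closure hΩ).preimage planeIso.toHomeomorph.isOpenMap

/-! ### The kinematics of one fluid -/

theorem norm_image_sub_sub_fderivWithin_le {E F : Type*} [NormedAddCommGroup E] [NormedSpace ℝ E]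
    [NormedAddCommGroup F] [NormedSpace ℝ F] {f : E → F} {s : Set E} (hs : Convex ℝ s)
    (hu : UniqueDiffOn ℝ s) (hf : ContDiffOn ℝ 2 f s) {A : ℝ}
    (hA : ∀ p ∈ s, ‖iteratedFDerivWithin ℝ 2 f s p‖ ≤ A) {p q : E} (hp : p ∈ s) (hq : q ∈ s) :
    ‖f q - f p - fderivWithin ℝ f s p (q - p)‖ ≤ A * ‖q - p‖ ^ 2 := by
  have hf' : ContDiffOn ℝ 1 (fderivWithin ℝ f s) s := hf.fderivWithin hu (by norm_num)
  have hbound : ∀ x ∈ s, ‖fderivWithin ℝ (fderivWithin ℝ f s) s x‖ ≤ A := fun x hx => by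
    rw [← norm_iteratedFDerivWithin_one _ (hu x hx), norm_iteratedFDerivWithin_fderivWithin hu hx]
    exact hA x hx
  have hA0 : 0 ≤ A := le_trans (norm_nonneg (iteratedFDerivWithin ℝ 2 f s p)) (hA p hp)
  have hnear : ∀ x ∈ s ∩ closedBall p ‖q - p‖,
      ‖fderivWithin ℝ f s x - fderivWithin ℝ f s p‖ ≤ A * ‖q - p‖ := fun x hx => by
    refine (hs.norm_image_sub_le_of_norm_fderivWithin_le (hf'.differentiableOn one_ne_zero)
      hbound hp hx.1).trans ?_
    gcongr
    exact mem_closedBall_iff_norm.1 hx.2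
  have := (hs.inter (convex_closedBall p ‖q - p‖)).norm_image_sub_le_of_norm_hasFDerivWithin_le'
    (fun x hx =>
      (hf.differentiableOn two_ne_zero x hx.1).hasFDerivWithinAt.mono inter_subset_left)
    hnear ⟨hp, mem_closedBall_self (norm_nonneg _)⟩ ⟨hq, by simp [dist_eq_norm]⟩
  rwa [mul_assoc, ← sq] at this

theorem norm_sub_le_of_openSegment_subset {E F : Type*} [NormedAddCommGroup E] [NormedSpace ℝ E]
    [NormedAddCommGroup F] [NormedSpace ℝ F] {f : E → F} {Ω : Set E} (hΩ : IsOpen Ω)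
    (hf : ContinuousOn f (closure Ω)) (hdiff : DifferentiableOn ℝ f Ω) {C : ℝ}
    (hC : ∀ x ∈ Ω, ‖fderiv ℝ f x‖ ≤ C) {x y : E} (hxy : openSegment ℝ x y ⊆ Ω) :
    ‖f y - f x‖ ≤ C * ‖y - x‖ := by
  have hbound : ∀ p ∈ openSegment ℝ x y ×ˢ openSegment ℝ x y,
      ‖f p.2 - f p.1‖ ≤ C * ‖p.2 - p.1‖ := fun p hp =>
    (convex_openSegment x y).norm_image_sub_le_of_norm_fderiv_le
      (fun w hw => (hdiff w (hxy hw)).differentiableAt (hΩ.mem_nhds (hxy hw)))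
      (fun w hw => hC w (hxy hw)) hp.1 hp.2
  have hsub := closure_mono hxy
  have hcont : ContinuousOn (fun p : E × E => ‖f p.2 - f p.1‖)
      (closure (openSegment ℝ x y ×ˢ openSegment ℝ x y)) := by
    rw [closure_prod_eq]
    exact ((hf.comp continuousOn_snd fun p hp => hsub hp.2).sub
      (hf.comp continuousOn_fst fun p hp => hsub hp.1)).norm
  refine le_on_closure (f := fun p : E × E => ‖f p.2 - f p.1‖) (g := fun p => C * ‖p.2 - p.1‖)
    (x := (x, y)) hbound hcont (by fun_prop) ?_
  rw [closure_prod_eq, closure_openSegment]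
  exact ⟨left_mem_segment ℝ x y, right_mem_segment ℝ x y⟩

theorem norm_xvec : ‖xvec‖ = 1 := by
  rw [EuclideanSpace.norm_eq]
  simp [xvec]

theorem exists_eq_smul_of_rinner_perpv_eq_zero {w d : E2} (hd : d ≠ 0)
    (h : rinner w (perpv d) = 0) : ∃ c : ℝ, w = c • d := by
  have hcross : w 0 * d 1 = w 1 * d 0 := by
    simp only [rinner, perpv, PiLp.inner_apply, Fin.sum_univ_two, Fin.isValue,
      PiLp.continuousLinearEquiv_symm_apply, Matrix.cons_val_zero, RCLike.inner_apply,
      Real.ringHom_apply, neg_mul, Matrix.cons_val_one, Matrix.cons_val_fin_one] at h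
    linarith
  have hsq : d 0 ^ 2 + d 1 ^ 2 ≠ 0 := fun h0 => hd <| by
    ext i
    fin_cases i <;> simp only [Fin.zero_eta, Fin.mk_one, PiLp.zero_apply] <;>
      nlinarith [sq_nonneg (d 0), sq_nonneg (d 1)]
  refine ⟨(w 0 * d 0 + w 1 * d 1) / (d 0 ^ 2 + d 1 ^ 2), ?_⟩
  ext i
  fin_cases i
  · simp only [PiLp.smul_apply, smul_eq_mul, Fin.zero_eta]
    field_simp
    linear_combination d 1 * hcross
  · simp only [PiLp.smul_apply, smul_eq_mul, Fin.mk_one]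
    field_simp
    linear_combination -d 0 * hcross

/-- The space-time slab `ℝ × [0,T]` of parameters `(α, t)`. -/
abbrev timeSlab (T : ℝ) : Set (ℝ × ℝ) := univ ×ˢ Icc 0 T

/-- The kinematics of a potential flow in a moving `2π`-periodic domain `Ω t` below a regular
interface `z(·,t)`: the velocity is divergence and curl free, the interface moves with it in the
normal direction, and `A` bounds the interface and the trace of the velocity. What is left of the
second fluid is the connectedness of the exterior of `Ω t`. -/
structure OneFluid (T A : ℝ) where
  z : ℝ → ℝ → E2
  Ω : ℝ → Set E2
  u : E2 → ℝ → E2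
  isOpen : ∀ t ∈ Icc 0 T, IsOpen (Ω t)
  isPreconnected : ∀ t ∈ Icc 0 T, IsPreconnected (Ω t)
  isPreconnected_exterior : ∀ t ∈ Icc 0 T, IsPreconnected (closure (Ω t))ᶜ
  frontier_eq : ∀ t ∈ Icc 0 T, frontier (Ω t) = range fun α => z α t
  exists_strip : ∃ a, ∀ t ∈ Icc 0 T,
    {x : E2 | x 1 ≤ -a} ⊆ Ω t ∧ {x : E2 | a ≤ x 1} ⊆ (closure (Ω t))ᶜ
  contDiffOn_velocity : ∀ t ∈ Icc 0 T, ContDiffOn ℝ 1 (fun x => u x t) (closure (Ω t))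
  isDivCurlFree : ∀ t ∈ Icc 0 T, ∀ x ∈ Ω t, IsDivCurlFree (fderiv ℝ (fun y => u y t) x)
  kinematic : ∀ t ∈ Ioo 0 T, ∀ α : ℝ,
    rinner (deriv (fun s => z α s) t - u (z α t) t) (perpv (deriv (fun a => z a t) α)) = 0
  z_add_two_pi : ∀ t ∈ Icc 0 T, ∀ α, z (α + 2 * Real.pi) t = z α t + transl
  add_transl_mem_iff : ∀ t ∈ Icc 0 T, ∀ x, x + transl ∈ Ω t ↔ x ∈ Ω t
  u_add_transl : ∀ t ∈ Icc 0 T, ∀ x ∈ Ω t, u (x + transl) t = u x t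
  integrableOn_norm_sq : ∀ t ∈ Icc 0 T,
    IntegrableOn (fun x => ‖u x t‖ ^ 2) (Ω t ∩ {x | x 0 ∈ Icc 0 (2 * Real.pi)})
  contDiffOn_displacement :
    ContDiffOn ℝ 2 (fun p : ℝ × ℝ => z p.1 p.2 - p.1 • xvec) (timeSlab T)
  norm_displacement_le : ∀ p ∈ timeSlab T, ∀ i ≤ 2,
    ‖iteratedFDerivWithin ℝ i (fun p : ℝ × ℝ => z p.1 p.2 - p.1 • xvec) (timeSlab T) p‖ ≤ A
  inv_le_norm_deriv : ∀ t ∈ Icc 0 T, ∀ α, A⁻¹ ≤ ‖deriv (fun a => z a t) α‖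
  contDiffOn_trace : ContDiffOn ℝ 1 (fun p : ℝ × ℝ => u (z p.1 p.2) p.2) (timeSlab T)
  norm_fderivWithin_trace_le : ∀ p ∈ timeSlab T,
    ‖fderivWithin ℝ (fun p : ℝ × ℝ => u (z p.1 p.2) p.2) (timeSlab T) p‖ ≤ A
  chordArc_zero : ∀ α β, A⁻¹ * |α - β| ≤ ‖z α 0 - z β 0‖

theorem compl_closure_eq_of_partition {X : Type*} [TopologicalSpace X] {U V Γ : Set X}
    (hV : IsOpen V) (hcover : U ∪ V ∪ Γ = univ) (hUV : Disjoint U V) (hΓ : frontier U = Γ) :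
    (closure U)ᶜ = V := by
  refine Subset.antisymm (fun x hx => ?_) (subset_compl_iff_disjoint_left.2 ?_)
  · rcases hcover.ge (mem_univ x) with (h | h) | h
    · exact absurd (subset_closure h) hx
    · exact h
    · exact absurd (frontier_subset_closure (hΓ.ge h)) hx
  · exact hUV.closure_left hV

/-- The first fluid of a two-fluid system. -/
def TwoFluid.toOneFluid {ρ1 ρ2 σ grav T A : ℝ} (D : TwoFluid ρ1 ρ2 σ grav T A) (hT : 0 < T) :
    OneFluid T A :=
  have hext : ∀ t ∈ Icc 0 T, (closure (D.Ω1 t))ᶜ = D.Ω2 t := fun t ht =>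
    compl_closure_eq_of_partition (D.hΩ2_open t ht) (D.hUnion t ht) (D.hDisj12 t ht)
      (D.hFront1 t ht)
  { z := D.z
    Ω := D.Ω1
    u := D.u1
    isOpen := D.hΩ1_open
    isPreconnected := fun t ht => (D.hΩ1_conn t ht).isPreconnected
    isPreconnected_exterior := fun t ht => by
      rw [hext t ht]
      exact (D.hΩ2_conn t ht).isPreconnected
    frontier_eq := D.hFront1
    exists_strip := by
      obtain ⟨a, -, ha⟩ := D.hStrip
      exact ⟨a, fun t ht => ⟨(ha t ht).1, (hext t ht).symm ▸ (ha t ht).2⟩⟩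
    contDiffOn_velocity := fun t ht => (D.hu1_reg t ht).of_le (by norm_num)
    isDivCurlFree := fun t ht x hx => ⟨D.hdiv1 t ht x hx, D.hcurl1 t ht x hx⟩
    kinematic := fun t ht => D.hkin1 t (Ioo_subset_Icc_self ht)
    z_add_two_pi := D.hper_z
    add_transl_mem_iff := fun t ht x => by
      nth_rw 1 [← D.hper_Ω1 t ht]
      exact (add_left_injective transl).mem_set_image
    u_add_transl := D.hper_u1
    integrableOn_norm_sq := D.hL2_1
    contDiffOn_displacement := D.hz_smooth.of_le (by norm_num)
    norm_displacement_le := fun p hp i hi => D.hz_bound p hp i (hi.trans (by norm_num))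
    inv_le_norm_deriv := D.hz_lower
    contDiffOn_trace := D.hv1_smooth.of_le (by norm_num)
    norm_fderivWithin_trace_le := fun p hp => by
      rw [← norm_iteratedFDerivWithin_one _
        (uniqueDiffOn_univ.prod (uniqueDiffOn_Icc hT) p hp)]
      exact D.hv1_bound p hp 1 (by norm_num)
    chordArc_zero := fun α β => by
      rcases eq_or_ne α β with rfl | hne
      · simp
      · have := D.hchord0 α β
        rwa [chordArcT, if_neg hne, le_div_iff₀ (abs_pos.2 (sub_ne_zero.2 hne))] at this }

theorem uniqueDiffOn_timeSlab {T : ℝ} (hT : 0 < T) : UniqueDiffOn ℝ (timeSlab T) :=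
  uniqueDiffOn_univ.prod (uniqueDiffOn_Icc hT)

theorem convex_timeSlab (T : ℝ) : Convex ℝ (timeSlab T) :=
  convex_univ.prod (convex_Icc 0 T)

namespace OneFluid

variable {T A : ℝ} (D : OneFluid T A)

/-- The displacement `z(α,t) - (α,0)`, as a function on space-time. -/
def displacement (p : ℝ × ℝ) : E2 := D.z p.1 p.2 - p.1 • xvec

/-- The space-time derivative of the interface `z`, one-sided at the times `0` and `T`. -/
def dz (p : ℝ × ℝ) : ℝ × ℝ →L[ℝ] E2 :=
  fderivWithin ℝ D.displacement (timeSlab T) p + (ContinuousLinearMap.fst ℝ ℝ ℝ).smulRight xvec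

theorem hasFDerivWithinAt_displacement {p : ℝ × ℝ} (hp : p ∈ timeSlab T) :
    HasFDerivWithinAt D.displacement (fderivWithin ℝ D.displacement (timeSlab T) p)
      (timeSlab T) p :=
  (D.contDiffOn_displacement.differentiableOn two_ne_zero p hp).hasFDerivWithinAt

theorem hasFDerivWithinAt_z {p : ℝ × ℝ} (hp : p ∈ timeSlab T) :
    HasFDerivWithinAt (fun q : ℝ × ℝ => D.z q.1 q.2) (D.dz p) (timeSlab T) p := by
  convert! (D.hasFDerivWithinAt_displacement hp).add
    ((ContinuousLinearMap.fst ℝ ℝ ℝ).smulRight xvec).hasFDerivWithinAt using 1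
  ext1 q
  simp [displacement]

theorem continuousOn_dz (hT : 0 < T) : ContinuousOn D.dz (timeSlab T) :=
  (D.contDiffOn_displacement.continuousOn_fderivWithin (uniqueDiffOn_timeSlab hT)
    one_le_two).add continuousOn_const

theorem continuousOn_z : ContinuousOn (fun p : ℝ × ℝ => D.z p.1 p.2) (timeSlab T) :=
  fun _ hp => (D.hasFDerivWithinAt_z hp).continuousWithinAt

theorem hasDerivAt_z {t : ℝ} (ht : t ∈ Icc 0 T) (α : ℝ) :
    HasDerivAt (fun a => D.z a t) (D.dz (α, t) (1, 0)) α := by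
  have hpath : HasDerivAt (fun a : ℝ => (a, t)) (1, 0) α :=
    (hasDerivAt_id α).prodMk (hasDerivAt_const α t)
  exact ((D.hasFDerivWithinAt_z ⟨mem_univ α, ht⟩).comp_hasDerivWithinAt (s := univ) α
    hpath.hasDerivWithinAt fun a _ => ⟨mem_univ a, ht⟩).hasDerivAt univ_mem

theorem hasDerivAt_z_time {t : ℝ} (ht : t ∈ Ioo 0 T) (α : ℝ) :
    HasDerivAt (fun s => D.z α s) (D.dz (α, t) (0, 1)) t := by
  have hpath : HasDerivAt (fun s : ℝ => (α, s)) (0, 1) t :=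
    (hasDerivAt_const t α).prodMk (hasDerivAt_id t)
  exact ((D.hasFDerivWithinAt_z ⟨mem_univ α, Ioo_subset_Icc_self ht⟩).comp_hasDerivWithinAt
    (s := Icc 0 T) t hpath.hasDerivWithinAt fun s hs => ⟨mem_univ α, hs⟩).hasDerivAt
    (Icc_mem_nhds ht.1 ht.2)

theorem contDiff_z (hT : 0 < T) {t : ℝ} (ht : t ∈ Icc 0 T) : ContDiff ℝ 1 fun a => D.z a t := by
  refine contDiff_one_iff_deriv.2 ⟨fun α => (D.hasDerivAt_z ht α).differentiableAt, ?_⟩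
  rw [funext fun α => (D.hasDerivAt_z ht α).deriv]
  exact ((D.continuousOn_dz hT).comp_continuous (by fun_prop) fun α => ⟨mem_univ α, ht⟩).clm_apply
    continuous_const

theorem inv_le_norm_dz {t : ℝ} (ht : t ∈ Icc 0 T) (α : ℝ) : A⁻¹ ≤ ‖D.dz (α, t) (1, 0)‖ :=
  (D.inv_le_norm_deriv t ht α).trans_eq (by rw [(D.hasDerivAt_z ht α).deriv])

theorem dz_ne_zero (hA : 0 < A) {t : ℝ} (ht : t ∈ Icc 0 T) (α : ℝ) : D.dz (α, t) (1, 0) ≠ 0 :=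
  norm_pos_iff.1 ((inv_pos.2 hA).trans_le (D.inv_le_norm_dz ht α))

theorem rinner_dz_sub_velocity (hT : 0 < T) {t : ℝ} (ht : t ∈ Icc 0 T) (α : ℝ) :
    rinner (D.dz (α, t) (0, 1) - D.u (D.z α t) t) (perpv (D.dz (α, t) (1, 0))) = 0 := by
  have hdz (v : ℝ × ℝ) : ContinuousOn (fun s => D.dz (α, s) v) (Icc 0 T) :=
    ((D.continuousOn_dz hT).comp (by fun_prop) fun s hs => ⟨mem_univ α, hs⟩).clm_apply
      continuousOn_const
  have htrace : ContinuousOn (fun s => D.u (D.z α s) s) (Icc 0 T) :=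
    D.contDiffOn_trace.continuousOn.comp (f := fun s : ℝ => (α, s)) (by fun_prop)
      fun s hs => ⟨mem_univ α, hs⟩
  have hperp : Continuous perpv := by
    unfold perpv
    fun_prop
  have hcont : ContinuousOn (fun s => rinner (D.dz (α, s) (0, 1) - D.u (D.z α s) s)
      (perpv (D.dz (α, s) (1, 0)))) (Icc 0 T) :=
    ((hdz _).sub htrace).inner (𝕜 := ℝ) (hperp.comp_continuousOn (hdz _))
  refine EqOn.of_subset_closure (fun s hs => ?_) hcont continuousOn_const Ioo_subset_Icc_self
    (closure_Ioo hT.ne).ge ht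
  rw [← (D.hasDerivAt_z_time hs α).deriv, ← (D.hasDerivAt_z (Ioo_subset_Icc_self hs) α).deriv]
  exact D.kinematic s hs α

/-- The interface differs from a material curve by a reparametrization only, which the drift `c`
undoes. -/
theorem exists_hasDerivWithinAt_backward (hT : 0 < T) (hA : 0 < A) {t : ℝ} (ht : t ∈ Icc 0 T)
    (α : ℝ) : ∃ c : ℝ,
      HasDerivWithinAt (fun h => D.z (α - h * c) (t - h)) (-D.u (D.z α t) t) (Icc 0 t) 0 := by
  obtain ⟨c, hc⟩ := exists_eq_smul_of_rinner_perpv_eq_zero (D.dz_ne_zero hA ht α)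
    (D.rinner_dz_sub_velocity hT ht α)
  refine ⟨-c, ?_⟩
  have hpath : HasDerivAt (fun h : ℝ => (α - h * -c, t - h)) (c, -1) 0 := by
    simpa using (((hasDerivAt_id (0 : ℝ)).mul_const (-c)).const_sub α).prodMk
      ((hasDerivAt_id (0 : ℝ)).const_sub t)
  have hz : HasFDerivWithinAt (fun q : ℝ × ℝ => D.z q.1 q.2) (D.dz (α, t)) (timeSlab T)
      (α - 0 * -c, t - 0) := by
    simpa using D.hasFDerivWithinAt_z (p := (α, t)) ⟨mem_univ α, ht⟩
  have hvel : D.dz (α, t) (c, -1) = -D.u (D.z α t) t := by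
    have hsplit : ((c, -1) : ℝ × ℝ) = c • (1, 0) - (0, 1) := by simp
    rw [hsplit, map_sub, map_smul, ← hc]
    abel
  rw [← hvel]
  have hmaps : MapsTo (fun h : ℝ => (α - h * -c, t - h)) (Icc 0 t) (timeSlab T) := fun h hh =>
    ⟨mem_univ _, by linarith [hh.2], by linarith [hh.1, ht.2]⟩
  exact hz.comp_hasDerivWithinAt 0 hpath.hasDerivWithinAt hmaps

theorem norm_z_sub_smul_le {t : ℝ} (ht : t ∈ Icc 0 T) (α : ℝ) : ‖D.z α t - α • xvec‖ ≤ A := by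
  simpa using D.norm_displacement_le (α, t) ⟨mem_univ α, ht⟩ 0 (by norm_num)

theorem norm_z_sub_z_time_le (hT : 0 < T) {s t : ℝ} (hs : s ∈ Icc 0 T) (ht : t ∈ Icc 0 T)
    (α : ℝ) : ‖D.z α s - D.z α t‖ ≤ A * |s - t| := by
  have hbound : ∀ p ∈ timeSlab T, ‖fderivWithin ℝ D.displacement (timeSlab T) p‖ ≤ A :=
    fun p hp => by
      rw [← norm_iteratedFDerivWithin_one _ (uniqueDiffOn_timeSlab hT p hp)]
      exact D.norm_displacement_le p hp 1 one_le_two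
  have := (convex_timeSlab T).norm_image_sub_le_of_norm_hasFDerivWithin_le
    (fun p hp => D.hasFDerivWithinAt_displacement hp) hbound (x := (α, t)) (y := (α, s))
    ⟨mem_univ α, ht⟩ ⟨mem_univ α, hs⟩
  simpa [displacement, Prod.norm_def] using this

theorem abs_sub_sub_two_mul_le_norm {t : ℝ} (ht : t ∈ Icc 0 T) (α β : ℝ) :
    |α - β| - 2 * A ≤ ‖D.z α t - D.z β t‖ := by
  have hsplit : (α - β) • xvec =
      (D.z α t - D.z β t) - (D.z α t - α • xvec) + (D.z β t - β • xvec) := by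
    module
  have hnorm : ‖(α - β) • xvec‖ = |α - β| := by
    rw [norm_smul, norm_xvec, Real.norm_eq_abs, mul_one]
  rw [hsplit] at hnorm
  linarith [norm_add_le ((D.z α t - D.z β t) - (D.z α t - α • xvec)) (D.z β t - β • xvec),
    norm_sub_le (D.z α t - D.z β t) (D.z α t - α • xvec), D.norm_z_sub_smul_le ht α,
    D.norm_z_sub_smul_le ht β]

theorem abs_sub_div_le_norm (hT : 0 < T) (hA : 0 < A) {t : ℝ} (ht : t ∈ Icc 0 T) {α β : ℝ}
    (h : |α - β| ≤ (2 * A ^ 2)⁻¹) : |α - β| / (2 * A) ≤ ‖D.z α t - D.z β t‖ := by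
  have htaylor : ‖D.z α t - D.z β t - (α - β) • D.dz (β, t) (1, 0)‖ ≤ A * |α - β| ^ 2 := by
    have hstep : ((α, t) - (β, t) : ℝ × ℝ) = (α - β) • (1, 0) := by simp
    have hsplit : D.z α t - D.z β t - (α - β) • D.dz (β, t) (1, 0) =
        D.displacement (α, t) - D.displacement (β, t) -
          fderivWithin ℝ D.displacement (timeSlab T) (β, t) ((α, t) - (β, t)) := by
      rw [hstep, map_smul]
      simp only [dz, displacement, add_apply, ContinuousLinearMap.smulRight_apply,
        ContinuousLinearMap.coe_fst', one_smul]
      module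
    have hnorm : ‖((α, t) - (β, t) : ℝ × ℝ)‖ = |α - β| := by
      rw [hstep, norm_smul, Real.norm_eq_abs, Prod.norm_def]
      simp
    rw [hsplit, ← hnorm]
    exact norm_image_sub_sub_fderivWithin_le (convex_timeSlab T) (uniqueDiffOn_timeSlab hT)
      D.contDiffOn_displacement (fun p hp => D.norm_displacement_le p hp 2 le_rfl)
      ⟨mem_univ β, ht⟩ ⟨mem_univ α, ht⟩
  have htangent : |α - β| * A⁻¹ ≤ ‖(α - β) • D.dz (β, t) (1, 0)‖ := by
    rw [norm_smul, Real.norm_eq_abs]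
    exact mul_le_mul_of_nonneg_left (D.inv_le_norm_dz ht β) (abs_nonneg _)
  have hquad : A * |α - β| ^ 2 ≤ |α - β| / (2 * A) := calc
    A * |α - β| ^ 2 = A * |α - β| * |α - β| := by ring
    _ ≤ A * |α - β| * (2 * A ^ 2)⁻¹ := by gcongr
    _ = |α - β| / (2 * A) := by field_simp
  have hhalf : |α - β| * A⁻¹ = |α - β| / (2 * A) + |α - β| / (2 * A) := by field_simp; ring
  have := norm_sub_norm_le ((α - β) • D.dz (β, t) (1, 0)) (D.z α t - D.z β t)
  rw [norm_sub_rev ((α - β) • D.dz (β, t) (1, 0))] at this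
  linarith

end OneFluid

theorem eventually_mem_of_frontier_subset_thickening {ι E : Type*} [NormedAddCommGroup E]
    [NormedSpace ℝ E] {l : Filter ι} {O : ι → Set E} {O₀ : Set E} (hO : ∀ᶠ i in l, IsOpen (O i))
    (hO₀ : IsOpen O₀) (hconn : IsPreconnected O₀) {w : E} (hw : ∀ᶠ i in l, w ∈ O i) (hw₀ : w ∈ O₀)
    (hfront : ∀ η > 0, ∀ᶠ i in l, frontier (O i) ⊆ thickening η O₀ᶜ) {x : E} (hx : x ∈ O₀) :
    ∀ᶠ p in l ×ˢ 𝓝 x, p.2 ∈ O p.1 := by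
  obtain ⟨γ, hγ⟩ := (hO₀.isConnected_iff_isPathConnected.1 ⟨⟨x, hx⟩, hconn⟩).joinedIn x hx w hw₀
  obtain ⟨r, hr, hsub⟩ := (isCompact_range γ.continuous).exists_thickening_subset_open hO₀
    (range_subset_iff.2 hγ)
  have hpre : IsPreconnected (range γ ∪ ball x (r / 2)) :=
    (isPreconnected_range γ.continuous).union x ⟨0, γ.source⟩ (mem_ball_self (half_pos hr))
      (convex_ball x _).isPreconnected
  have hthick : thickening (r / 2) (range γ ∪ ball x (r / 2)) ⊆ O₀ := by
    refine Subset.trans (fun y hy => ?_) hsub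
    obtain ⟨p, hp | hp, hyp⟩ := mem_thickening_iff.1 hy
    · exact mem_thickening_iff.2 ⟨p, hp, hyp.trans (half_lt_self hr)⟩
    · exact mem_thickening_iff.2 ⟨x, ⟨0, γ.source⟩, by
        linarith [dist_triangle y p x, mem_ball.1 hp]⟩
  filter_upwards [((hO.and hw).and (hfront _ (half_pos hr))).prod_mk
    (ball_mem_nhds x (half_pos hr))] with p ⟨⟨⟨hpO, hpw⟩, hpfront⟩, hpx⟩
  refine hpre.subset_of_closure_inter_subset hpO ⟨w, Or.inl ⟨1, γ.target⟩, hpw⟩ ?_ (Or.inr hpx)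
  rintro y ⟨hyc, hyC⟩
  by_contra hyO
  obtain ⟨q, hq, hyq⟩ := mem_thickening_iff.1 (hpfront (hpO.frontier_eq.ge ⟨hyc, hyO⟩))
  exact hq (hthick (mem_thickening_iff.2 ⟨y, hyC, by rwa [dist_comm]⟩))

namespace OneFluid

variable {T A : ℝ} (D : OneFluid T A)

theorem z_mem_frontier {t : ℝ} (ht : t ∈ Icc 0 T) (α : ℝ) : D.z α t ∈ frontier (D.Ω t) :=
  (D.frontier_eq t ht).ge ⟨α, rfl⟩

theorem z_mem_closure {t : ℝ} (ht : t ∈ Icc 0 T) (α : ℝ) : D.z α t ∈ closure (D.Ω t) :=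
  frontier_subset_closure (D.z_mem_frontier ht α)

theorem z_notMem {t : ℝ} (ht : t ∈ Icc 0 T) (α : ℝ) : D.z α t ∉ D.Ω t :=
  disjoint_right.1 (disjoint_frontier_iff_isOpen.2 (D.isOpen t ht)).symm (D.z_mem_frontier ht α)

theorem range_z_subset_thickening (hT : 0 < T) {O : Set E2} {t : ℝ} (ht : t ∈ Icc 0 T)
    (hO : ∀ α, D.z α t ∉ O) {η : ℝ} (hη : 0 < η) :
    ∀ᶠ s in 𝓝[Icc 0 T] t, (range fun α => D.z α s) ⊆ thickening η Oᶜ := by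
  have hsmall : ∀ᶠ s in 𝓝[Icc 0 T] t, A * |s - t| < η :=
    (((by fun_prop : Continuous fun s : ℝ => A * |s - t|).tendsto' t 0 (by simp)).mono_left
      nhdsWithin_le_nhds).eventually_lt_const hη
  filter_upwards [hsmall, self_mem_nhdsWithin] with s hs hsT
  rintro _ ⟨α, rfl⟩
  refine mem_thickening_iff.2 ⟨D.z α t, hO α, ?_⟩
  rw [dist_eq_norm]
  exact (D.norm_z_sub_z_time_le hT hsT ht α).trans_lt hs

theorem eventually_mem (hT : 0 < T) {t : ℝ} (ht : t ∈ Icc 0 T) {x : E2} (hx : x ∈ D.Ω t) :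
    ∀ᶠ p in 𝓝[Icc 0 T] t ×ˢ 𝓝 x, p.2 ∈ D.Ω p.1 := by
  obtain ⟨a, ha⟩ := D.exists_strip
  refine eventually_mem_of_frontier_subset_thickening (w := EuclideanSpace.single 1 (-a))
    (eventually_mem_nhdsWithin.mono fun s hs => D.isOpen s hs) (D.isOpen t ht)
    (D.isPreconnected t ht) (eventually_mem_nhdsWithin.mono fun s hs => (ha s hs).1 (by simp))
    ((ha t ht).1 (by simp)) (fun η hη => ?_) hx
  filter_upwards [D.range_z_subset_thickening hT ht (D.z_notMem ht) hη, self_mem_nhdsWithin]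
    with s hs hsT
  rwa [D.frontier_eq s hsT]

theorem eventually_mem_exterior (hT : 0 < T) {t : ℝ} (ht : t ∈ Icc 0 T) {x : E2}
    (hx : x ∉ closure (D.Ω t)) : ∀ᶠ p in 𝓝[Icc 0 T] t ×ˢ 𝓝 x, p.2 ∉ closure (D.Ω p.1) := by
  obtain ⟨a, ha⟩ := D.exists_strip
  refine eventually_mem_of_frontier_subset_thickening (w := EuclideanSpace.single 1 a)
    (O := fun s => (closure (D.Ω s))ᶜ) (Eventually.of_forall fun s => isClosed_closure.isOpen_compl)
    isClosed_closure.isOpen_compl (D.isPreconnected_exterior t ht)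
    (eventually_mem_nhdsWithin.mono fun s hs => (ha s hs).2 (by simp))
    ((ha t ht).2 (by simp)) (fun η hη => ?_) hx
  filter_upwards [D.range_z_subset_thickening hT ht (O := (closure (D.Ω t))ᶜ)
    (fun α hα => hα (D.z_mem_closure ht α)) hη, self_mem_nhdsWithin] with s hs hsT
  rw [frontier_compl]
  exact (frontier_closure_subset.trans (D.frontier_eq s hsT).le).trans hs

theorem injective_z (hT : 0 < T) (hA : 0 < A) {t : ℝ} (ht : t ∈ Icc 0 T) :
    Function.Injective fun α => D.z α t := by
  obtain ⟨a, ha⟩ := D.exists_strip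
  have hunb : ∀ (c : ℝ) (S : Set E2), (∀ x : ℝ, !₂[x, c] ∈ S) → ¬ Bornology.IsBounded S := by
    intro c S hS hbdd
    obtain ⟨R, hR⟩ := isBounded_iff_forall_norm_le.1 hbdd
    have := (PiLp.norm_apply_le (!₂[R + 1, c]) 0).trans (hR _ (hS (R + 1)))
    rw [Real.norm_eq_abs] at this
    exact absurd ((le_abs_self _).trans this) (by simp)
  refine injective_of_range_subset_frontier (D.contDiff_z hT ht) (fun α => ?_) (D.isOpen t ht)
    (D.isPreconnected t ht) (D.isPreconnected_exterior t ht)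
    (hunb (-a) _ fun x => (ha t ht).1 (by simp)) (hunb a _ fun x => (ha t ht).2 (by simp))
    (D.frontier_eq t ht).ge
  rw [(D.hasDerivAt_z ht α).deriv]
  exact D.dz_ne_zero hA ht α

theorem norm_velocity_deriv_tangent_le (hA : 0 < A) {t : ℝ} (ht : t ∈ Icc 0 T) (α : ℝ)
    {L : E2 →L[ℝ] E2}
    (hL : HasFDerivWithinAt (fun x => D.u x t) L (closure (D.Ω t)) (D.z α t)) :
    ‖L (D.dz (α, t) (1, 0))‖ ≤ A ^ 2 * ‖D.dz (α, t) (1, 0)‖ := by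
  have hpath : HasDerivAt (fun a : ℝ => (a, t)) (1, 0) α :=
    (hasDerivAt_id α).prodMk (hasDerivAt_const α t)
  have hmaps : MapsTo (fun a : ℝ => (a, t)) univ (timeSlab T) := fun a _ => ⟨mem_univ a, ht⟩
  have htrace := ((D.contDiffOn_trace.differentiableOn one_ne_zero (α, t)
    ⟨mem_univ α, ht⟩).hasFDerivWithinAt.comp_hasDerivWithinAt α hpath.hasDerivWithinAt
    hmaps).hasDerivAt univ_mem
  have hcomp := (hL.comp_hasDerivWithinAt (s := univ) α (D.hasDerivAt_z ht α).hasDerivWithinAt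
    fun a _ => D.z_mem_closure ht a).hasDerivAt univ_mem
  rw [hcomp.unique htrace]
  calc _ ≤ A * ‖((1, 0) : ℝ × ℝ)‖ := ContinuousLinearMap.le_of_opNorm_le _
        (D.norm_fderivWithin_trace_le (α, t) ⟨mem_univ α, ht⟩) _
    _ = A ^ 2 * A⁻¹ := by
      rw [Prod.norm_def]
      field_simp
      simp
    _ ≤ A ^ 2 * ‖D.dz (α, t) (1, 0)‖ := by
      gcongr
      exact D.inv_le_norm_dz ht α

theorem norm_fderiv_velocity_le (hA : 0 < A) {t : ℝ} (ht : t ∈ Icc 0 T) {x : E2}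
    (hx : x ∈ D.Ω t) : ‖fderiv ℝ (fun y => D.u y t) x‖ ≤ A ^ 2 := by
  obtain ⟨a, ha⟩ := D.exists_strip
  refine norm_fderiv_le_of_isDivCurlFree (D.isOpen t ht) (ha t ht).1 (fun y hy => ?_)
    (D.add_transl_mem_iff t ht) (D.u_add_transl t ht) (D.contDiffOn_velocity t ht)
    (D.isDivCurlFree t ht) (D.integrableOn_norm_sq t ht) (by positivity) (fun y hy => ?_) hx
  · exact le_of_not_ge fun hya : a ≤ y 1 => (ha t ht).2 hya (subset_closure hy)
  · obtain ⟨α, rfl⟩ := (D.frontier_eq t ht).le hy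
    exact ⟨_, D.dz_ne_zero hA ht α, fun L hL => D.norm_velocity_deriv_tangent_le hA ht α hL⟩

theorem norm_velocity_sub_le (hA : 0 < A) {t : ℝ} (ht : t ∈ Icc 0 T) {x y : E2}
    (hxy : openSegment ℝ x y ⊆ D.Ω t) : ‖D.u x t - D.u y t‖ ≤ A ^ 2 * ‖x - y‖ := by
  rw [norm_sub_rev, norm_sub_rev x]
  exact norm_sub_le_of_openSegment_subset (D.isOpen t ht) (D.contDiffOn_velocity t ht).continuousOn
    (((D.contDiffOn_velocity t ht).mono subset_closure).differentiableOn one_ne_zero)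
    (fun w hw => D.norm_fderiv_velocity_le hA ht hw) hxy

end OneFluid

/-! ### Chords through the fluid -/

theorem exists_image_Ioo_subset_of_mem_of_notMem {X : Type*} [TopologicalSpace X] {w : ℝ → X}
    (hw : Continuous w) {O : Set X} (hO : IsOpen O) {a x b : ℝ} (hax : a ≤ x) (hxb : x ≤ b)
    (ha : w a ∉ O) (hx : w x ∈ O) (hb : w b ∉ O) :
    ∃ l₁ ∈ Ico a x, ∃ l₂ ∈ Ioc x b, w l₁ ∈ frontier O ∧ w l₂ ∈ frontier O ∧
      w '' Ioo l₁ l₂ ⊆ O := by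
  have hclosed : IsClosed (w ⁻¹' Oᶜ) := hO.isClosed_compl.preimage hw
  obtain ⟨l₁, ⟨⟨hal₁, hl₁x⟩, hl₁⟩, hmax⟩ :=
    (isCompact_Icc.inter_right hclosed).exists_isGreatest ⟨a, left_mem_Icc.2 hax, ha⟩
  obtain ⟨l₂, ⟨⟨hxl₂, hl₂b⟩, hl₂⟩, hmin⟩ :=
    (isCompact_Icc.inter_right hclosed).exists_isLeast ⟨b, right_mem_Icc.2 hxb, hb⟩
  have hl₁x' : l₁ < x := hl₁x.lt_of_ne fun h => hl₁ (h ▸ hx)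
  have hxl₂' : x < l₂ := hxl₂.lt_of_ne fun h => hl₂ (h ▸ hx)
  have hsub : w '' Ioo l₁ l₂ ⊆ O := by
    rintro _ ⟨l, hl, rfl⟩
    by_contra hlO
    rcases le_total l x with hlx | hxl
    · exact hl.1.not_ge (hmax ⟨⟨hal₁.trans hl.1.le, hlx⟩, hlO⟩)
    · exact hl.2.not_ge (hmin ⟨⟨hxl, hl.2.le.trans hl₂b⟩, hlO⟩)
  have hclosure : ∀ l ∈ Icc l₁ l₂, w l ∈ closure O := fun l hl => by
    rw [← closure_Ioo (hl₁x'.trans hxl₂').ne] at hl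
    exact map_mem_closure hw hl fun y hy => hsub ⟨y, hy, rfl⟩
  rw [hO.frontier_eq]
  exact ⟨l₁, ⟨hal₁, hl₁x'⟩, l₂, ⟨hxl₂', hl₂b⟩,
    ⟨hclosure l₁ (left_mem_Icc.2 (hl₁x.trans hxl₂)), hl₁⟩,
    ⟨hclosure l₂ (right_mem_Icc.2 (hl₁x.trans hxl₂)), hl₂⟩, hsub⟩

theorem eventually_norm_lt_exp_mul_of_hasDerivWithinAt {E : Type*} [NormedAddCommGroup E]
    [NormedSpace ℝ E] {φ : ℝ → E} {φ' : E} {t C : ℝ} (ht : 0 < t)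
    (hφ : HasDerivWithinAt φ φ' (Icc 0 t) 0) (hlt : ‖φ'‖ < C * ‖φ 0‖) :
    ∀ᶠ h in 𝓝[>] 0, ‖φ h‖ < Real.exp (C * h) * ‖φ 0‖ := by
  have hIcc : 𝓝[>] (0 : ℝ) ≤ 𝓝[Icc 0 t] 0 := by
    rw [← nhdsWithin_Ioc_eq_nhdsGT ht]
    exact nhdsWithin_mono _ Ioc_subset_Icc_self
  filter_upwards [(hφ.limsup_slope_norm_le hlt).filter_mono hIcc, self_mem_nhdsWithin]
    with h hslope hh
  have hh : 0 < h := hh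
  rw [sub_zero, Real.norm_eq_abs, abs_of_pos hh, inv_mul_lt_iff₀ hh] at hslope
  calc ‖φ h‖ < (C * h + 1) * ‖φ 0‖ := by linarith
    _ ≤ Real.exp (C * h) * ‖φ 0‖ := by
      gcongr
      exact Real.add_one_le_exp _

namespace OneFluid

variable {T A : ℝ} (D : OneFluid T A)

/-- The point of parameter `l` on the chord joining `z(α,t)` to `z(β,t)`, where `p = (t, α, β)`. -/
def chordPoint (p : ℝ × ℝ × ℝ) : ℝ → E2 := AffineMap.lineMap (D.z p.2.1 p.1) (D.z p.2.2 p.1)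

/-- The length of the chord joining `z(α,t)` to `z(β,t)`, where `p = (t, α, β)`. -/
def chordLength (p : ℝ × ℝ × ℝ) : ℝ := ‖D.z p.2.1 p.1 - D.z p.2.2 p.1‖

/-- The triples `(t, α, β)` for which `α` and `β` are at least `d` apart and the chord joining
`z(α,t)` to `z(β,t)` runs through the closure of the fluid. -/
def fluidChords (d : ℝ) : Set (ℝ × ℝ × ℝ) :=
  {p | p.1 ∈ Icc 0 T ∧ d ≤ |p.2.1 - p.2.2| ∧
    segment ℝ (D.z p.2.1 p.1) (D.z p.2.2 p.1) ⊆ closure (D.Ω p.1)}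

/-- The triples `(t, α, β)` with `t ∈ [0,T]`. -/
abbrev chordDomain (T : ℝ) : Set (ℝ × ℝ × ℝ) := Icc 0 T ×ˢ univ

theorem continuousOn_z_comp {Y : Type*} [TopologicalSpace Y] {f g : Y → ℝ} {s : Set Y}
    (hf : Continuous f) (hg : Continuous g) (hs : MapsTo g s (Icc 0 T)) :
    ContinuousOn (fun y => D.z (f y) (g y)) s :=
  D.continuousOn_z.comp (hf.prodMk hg).continuousOn fun _ hy => ⟨mem_univ _, hs hy⟩

theorem continuousOn_chordPoint :
    ContinuousOn (fun q : (ℝ × ℝ × ℝ) × ℝ => D.chordPoint q.1 q.2) (chordDomain T ×ˢ univ) := by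
  have hα := D.continuousOn_z_comp (f := fun q : (ℝ × ℝ × ℝ) × ℝ => q.1.2.1)
    (g := fun q => q.1.1) (s := chordDomain T ×ˢ univ) (by fun_prop) (by fun_prop)
    fun q hq => hq.1.1
  have hβ := D.continuousOn_z_comp (f := fun q : (ℝ × ℝ × ℝ) × ℝ => q.1.2.2)
    (g := fun q => q.1.1) (s := chordDomain T ×ˢ univ) (by fun_prop) (by fun_prop)
    fun q hq => hq.1.1
  simp only [chordPoint, AffineMap.lineMap_apply_module]
  fun_prop

theorem continuousOn_chordLength : ContinuousOn D.chordLength (chordDomain T) :=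
  ((D.continuousOn_z_comp (by fun_prop) continuous_fst fun _ hp => hp.1).sub
    (D.continuousOn_z_comp (by fun_prop) continuous_fst fun _ hp => hp.1)).norm

theorem norm_chordPoint_sub (p : ℝ × ℝ × ℝ) (l₁ l₂ : ℝ) :
    ‖D.chordPoint p l₁ - D.chordPoint p l₂‖ = |l₁ - l₂| * D.chordLength p := by
  rw [← dist_eq_norm, chordPoint, dist_lineMap_lineMap, Real.dist_eq, dist_eq_norm, chordLength]

theorem eq_ends_of_z_eq_chordPoint (hT : 0 < T) (hA : 0 < A) {t α β : ℝ} (ht : t ∈ Icc 0 T)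
    (hseg : openSegment ℝ (D.z α t) (D.z β t) ⊆ D.Ω t) {e l : ℝ} (hl : l ∈ Icc (0 : ℝ) 1)
    (he : D.z e t = D.chordPoint (t, α, β) l) : e = α ∧ l = 0 ∨ e = β ∧ l = 1 := by
  rcases eq_or_ne l 0 with rfl | hl0
  · exact Or.inl ⟨D.injective_z hT hA ht (by simpa [chordPoint] using he), rfl⟩
  rcases eq_or_ne l 1 with rfl | hl1
  · exact Or.inr ⟨D.injective_z hT hA ht (by simpa [chordPoint] using he), rfl⟩
  refine absurd (hseg ?_) (D.z_notMem ht e)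
  rw [he, openSegment_eq_image_lineMap]
  exact ⟨l, ⟨hl.1.lt_of_ne' hl0, hl.2.lt_of_ne hl1⟩, rfl⟩

theorem eventually_mem_closedBall_of_eq_chordPoint {p₀ : ℝ × ℝ × ℝ} (hp₀ : p₀ ∈ chordDomain T) :
    ∀ᶠ p in 𝓝[chordDomain T] p₀, ∀ l ∈ Icc (0 : ℝ) 1, ∀ e,
      D.z e p.1 = D.chordPoint p l → e ∈ closedBall p₀.2.1 (D.chordLength p₀ + 2 * A + 2) := by
  filter_upwards [(D.continuousOn_chordLength _ hp₀).eventually_lt_const (lt_add_one _),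
    (continuous_snd.fst.continuousWithinAt (x := p₀)).eventually (ball_mem_nhds _ one_pos),
    self_mem_nhdsWithin] with p hlen hα hp l hl e he
  have hdist : ‖D.z e p.1 - D.z p.2.1 p.1‖ ≤ D.chordLength p := by
    have := D.norm_chordPoint_sub p l 0
    rw [sub_zero, abs_of_nonneg hl.1, ← he] at this
    simp only [chordPoint, AffineMap.lineMap_apply_zero] at this
    exact this.trans_le (mul_le_of_le_one_left (norm_nonneg _) hl.2)
  rw [Real.dist_eq] at hα
  rw [mem_closedBall, Real.dist_eq]
  linarith [D.abs_sub_sub_two_mul_le_norm hp.1 e p.2.1, abs_sub_le e p.2.1 p₀.2.1]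

theorem eventually_z_ne_chordPoint {p₀ : ℝ × ℝ × ℝ} (hp₀ : p₀ ∈ chordDomain T) {y₀ : ℝ × ℝ}
    (hne : D.z y₀.1 p₀.1 ≠ D.chordPoint p₀ y₀.2) :
    ∀ᶠ q : (ℝ × ℝ × ℝ) × ℝ × ℝ in 𝓝 (p₀, y₀),
      q.1 ∈ chordDomain T → D.z q.2.1 q.1.1 ≠ D.chordPoint q.1 q.2.2 := by
  have hz := D.continuousOn_z_comp (f := fun q : (ℝ × ℝ × ℝ) × ℝ × ℝ => q.2.1)
    (g := fun q => q.1.1) (s := chordDomain T ×ˢ univ) (by fun_prop) (by fun_prop)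
    fun _ hq => hq.1.1
  have hchord : ContinuousOn (fun q : (ℝ × ℝ × ℝ) × ℝ × ℝ => D.chordPoint q.1 q.2.2)
      (chordDomain T ×ˢ univ) :=
    D.continuousOn_chordPoint.comp (f := fun q : (ℝ × ℝ × ℝ) × ℝ × ℝ => (q.1, q.2.2))
      (by fun_prop) fun _ hq => ⟨hq.1, mem_univ _⟩
  have hq₀ : (p₀, y₀) ∈ chordDomain T ×ˢ univ := ⟨hp₀, mem_univ _⟩
  have hev := ((hz.sub hchord) _ hq₀).tendsto.eventually_ne (sub_ne_zero.2 hne)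
  filter_upwards [eventually_nhdsWithin_iff.1 hev] with q hq hqdom
  exact sub_ne_zero.1 (hq ⟨hqdom, mem_univ _⟩)

theorem eventually_near_ends_of_eq_chordPoint (hT : 0 < T) (hA : 0 < A) {t α β η : ℝ}
    (ht : t ∈ Icc 0 T) (hη : 0 < η) (hseg : openSegment ℝ (D.z α t) (D.z β t) ⊆ D.Ω t) :
    ∀ᶠ p in 𝓝[chordDomain T] (t, α, β), ∀ l ∈ Icc (0 : ℝ) 1, ∀ e,
      D.z e p.1 = D.chordPoint p l → |e - α| < η ∧ l < 1 / 2 ∨ |e - β| < η ∧ 1 / 2 < l := by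
  have hdom : (t, α, β) ∈ chordDomain T := ⟨ht, mem_univ _⟩
  set U : Set (ℝ × ℝ) := {y | |y.1 - α| < η ∧ y.2 < 1 / 2 ∨ |y.1 - β| < η ∧ 1 / 2 < y.2} with hU
  have hUopen : IsOpen U := by
    simp only [hU, ofPred_or, ofPred_and]
    refine ((isOpen_lt ?_ ?_).inter (isOpen_lt ?_ ?_)).union
      ((isOpen_lt ?_ ?_).inter (isOpen_lt ?_ ?_)) <;> fun_prop
  have hK := ((isCompact_closedBall α (D.chordLength (t, α, β) + 2 * A + 2)).prod
    (isCompact_Icc (a := (0 : ℝ)) (b := 1))).diff hUopen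
  have hmiss := hK.eventually_forall_of_forall_eventually (x₀ := (t, α, β))
    (P := fun p y => p ∈ chordDomain T → D.z y.1 p.1 ≠ D.chordPoint p y.2) fun y hy =>
      D.eventually_z_ne_chordPoint hdom fun h => hy.2 <| by
        rcases D.eq_ends_of_z_eq_chordPoint hT hA ht hseg hy.1.2 h with ⟨h₁, h₂⟩ | ⟨h₁, h₂⟩
        · exact Or.inl (by simpa [h₁, h₂] using hη)
        · exact Or.inr (by norm_num [h₁, h₂, hη])
  filter_upwards [D.eventually_mem_closedBall_of_eq_chordPoint hdom,
    hmiss.filter_mono nhdsWithin_le_nhds, self_mem_nhdsWithin] with p hp hpK hpdom l hl e he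
  by_contra hnot
  exact hpK (e, l) ⟨⟨hp l hl e he, hl⟩, hnot⟩ hpdom he

/-- The nearby chord is trimmed to the maximal subchord around its midpoint that lies in the
fluid. -/
theorem eventually_exists_fluid_chord (hT : 0 < T) (hA : 0 < A) {t α β η : ℝ}
    (ht : t ∈ Icc 0 T) (hη : 0 < η) (hseg : openSegment ℝ (D.z α t) (D.z β t) ⊆ D.Ω t) :
    ∀ᶠ p in 𝓝[chordDomain T] (t, α, β), ∃ α' β', |α' - α| < η ∧ |β' - β| < η ∧
      segment ℝ (D.z α' p.1) (D.z β' p.1) ⊆ closure (D.Ω p.1) ∧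
      D.chordLength (p.1, α', β') ≤ D.chordLength p := by
  have hdom : (t, α, β) ∈ chordDomain T := ⟨ht, mem_univ _⟩
  have hmid : D.chordPoint (t, α, β) (1 / 2) ∈ D.Ω t := hseg <| by
    rw [openSegment_eq_image_lineMap]
    exact ⟨1 / 2, by norm_num, rfl⟩
  have hmid' : ∀ᶠ p in 𝓝[chordDomain T] (t, α, β), D.chordPoint p (1 / 2) ∈ D.Ω p.1 := by
    have htime : Tendsto (fun p : ℝ × ℝ × ℝ => p.1) (𝓝[chordDomain T] (t, α, β))
        (𝓝[Icc 0 T] t) :=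
      continuous_fst.continuousWithinAt.tendsto_nhdsWithin fun _ hp => hp.1
    have hpoint : ContinuousOn (fun p => D.chordPoint p (1 / 2)) (chordDomain T) :=
      D.continuousOn_chordPoint.comp (f := fun p : ℝ × ℝ × ℝ => (p, (1 / 2 : ℝ)))
        (by fun_prop) fun _ hp => ⟨hp, mem_univ _⟩
    exact (htime.prodMk (hpoint _ hdom)).eventually (D.eventually_mem hT ht hmid)
  filter_upwards [hmid', D.eventually_near_ends_of_eq_chordPoint hT hA ht hη hseg,
    self_mem_nhdsWithin] with p hp hends hpdom
  obtain ⟨l₁, ⟨hl₁, hl₁'⟩, l₂, ⟨hl₂', hl₂⟩, hfr₁, hfr₂, hsub⟩ :=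
    exists_image_Ioo_subset_of_mem_of_notMem (w := D.chordPoint p) (a := 0) (b := 1)
      AffineMap.lineMap_continuous (D.isOpen _ hpdom.1) (by norm_num) (by norm_num)
      (by simpa [chordPoint] using D.z_notMem hpdom.1 p.2.1) hp
      (by simpa [chordPoint] using D.z_notMem hpdom.1 p.2.2)
  obtain ⟨α', hα' : D.z α' p.1 = _⟩ := (D.frontier_eq _ hpdom.1).le hfr₁
  obtain ⟨β', hβ' : D.z β' p.1 = _⟩ := (D.frontier_eq _ hpdom.1).le hfr₂
  refine ⟨α', β', ((hends l₁ ⟨hl₁, by linarith⟩ α' hα').resolve_right fun h => by linarith [h.2]).1,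
    ((hends l₂ ⟨by linarith, hl₂⟩ β' hβ').resolve_left fun h => by linarith [h.2]).1, ?_, ?_⟩
  · rw [hα', hβ', ← closure_openSegment]
    refine closure_mono (Subset.trans ?_ hsub)
    rw [← openSegment_eq_Ioo (hl₁'.trans hl₂')]
    exact (image_openSegment ℝ _ l₁ l₂).ge
  · rw [chordLength, hα', hβ', D.norm_chordPoint_sub]
    exact mul_le_of_le_one_left (norm_nonneg _) (abs_le.2 ⟨by linarith, by linarith⟩)

theorem isClosed_closure_fluid (hT : 0 < T) :
    IsClosed {q : ℝ × E2 | q.1 ∈ Icc 0 T ∧ q.2 ∈ closure (D.Ω q.1)} := by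
  refine isOpen_compl_iff.1 (isOpen_iff_eventually.2 fun ⟨t, x⟩ hx => ?_)
  by_cases ht : t ∈ Icc 0 T
  · have hev := D.eventually_mem_exterior hT ht fun h => hx ⟨ht, h⟩
    rw [← nhdsWithin_univ x, ← nhdsWithin_prod_eq, eventually_nhdsWithin_iff] at hev
    filter_upwards [hev] with q hq hmem using hq ⟨hmem.1, mem_univ _⟩ hmem.2
  · filter_upwards [(isClosed_Icc.isOpen_compl.preimage continuous_fst).mem_nhds ht]
      with q hq hmem using hq hmem.1

theorem isClosed_fluidChords (hT : 0 < T) (d : ℝ) : IsClosed (D.fluidChords d) := by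
  have hdom : IsClosed (chordDomain T) := isClosed_Icc.prod isClosed_univ
  have hpoint (l : ℝ) : ContinuousOn (fun p => (p.1, D.chordPoint p l)) (chordDomain T) :=
    continuousOn_fst.prodMk (D.continuousOn_chordPoint.comp
      (f := fun p : ℝ × ℝ × ℝ => (p, l)) (by fun_prop) fun _ hp => ⟨hp, mem_univ _⟩)
  have hinter : D.fluidChords d = {p | d ≤ |p.2.1 - p.2.2|} ∩ ⋂ l ∈ Icc (0 : ℝ) 1,
      chordDomain T ∩ (fun p => (p.1, D.chordPoint p l)) ⁻¹'
        {q : ℝ × E2 | q.1 ∈ Icc 0 T ∧ q.2 ∈ closure (D.Ω q.1)} := by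
    ext p
    simp only [fluidChords, segment_eq_image_lineMap, image_subset_iff, mem_inter_iff, mem_iInter,
      mem_preimage, mem_ofPred_eq]
    refine ⟨fun ⟨ht, hd, hl⟩ => ⟨hd, fun l hl01 => ⟨⟨ht, mem_univ _⟩, ht, hl hl01⟩⟩,
      fun ⟨hd, hl⟩ => ⟨(hl 0 (by simp)).2.1, hd, fun l hl01 => (hl l hl01).2.2⟩⟩
  rw [hinter]
  exact (isClosed_le (by fun_prop) (by fun_prop)).inter <| isClosed_biInter fun l _ =>
    (hpoint l).preimage_isClosed_of_isClosed hdom (D.isClosed_closure_fluid hT)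

theorem z_add_zsmul_two_pi {t : ℝ} (ht : t ∈ Icc 0 T) (α : ℝ) (n : ℤ) :
    D.z (α + n • (2 * Real.pi)) t = D.z α t + n • transl :=
  AddConstMapClass.map_add_zsmul
    (⟨fun a => D.z a t, D.z_add_two_pi t ht⟩ : AddConstMap ℝ E2 (2 * Real.pi) transl) α n

theorem add_zsmul_transl_mem_closure_iff {t : ℝ} (ht : t ∈ Icc 0 T) (x : E2) (n : ℤ) :
    x + n • transl ∈ closure (D.Ω t) ↔ x ∈ closure (D.Ω t) := by
  have hper : Function.Periodic (· ∈ closure (D.Ω t)) transl := fun y => propext <| by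
    have hpre : (· + transl) ⁻¹' D.Ω t = D.Ω t := ext (D.add_transl_mem_iff t ht)
    change y ∈ (· + transl) ⁻¹' closure (D.Ω t) ↔ y ∈ closure (D.Ω t)
    rw [← Homeomorph.coe_addRight, Homeomorph.preimage_closure, Homeomorph.coe_addRight, hpre]
  exact (hper.zsmul n x).to_iff

theorem exists_fluidChords_mem_Icc {d : ℝ} {p : ℝ × ℝ × ℝ} (hp : p ∈ D.fluidChords d) :
    ∃ q ∈ D.fluidChords d, q.2.1 ∈ Icc 0 (2 * Real.pi) ∧ q.1 = p.1 ∧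
      D.chordLength q = D.chordLength p := by
  obtain ⟨ht, hd, hseg⟩ := hp
  obtain ⟨n, hn, -⟩ := existsUnique_add_zsmul_mem_Ico Real.two_pi_pos p.2.1 0
  refine ⟨(p.1, p.2.1 + n • (2 * Real.pi), p.2.2 + n • (2 * Real.pi)), ⟨ht, ?_, ?_⟩,
    by simpa using Ico_subset_Icc_self hn, rfl, ?_⟩
  · simpa using hd
  · simp only [D.z_add_zsmul_two_pi ht]
    intro x hx
    rw [← sub_add_cancel x (n • transl), D.add_zsmul_transl_mem_closure_iff ht]
    refine hseg ?_
    rwa [← mem_segment_translate ℝ (n • transl), add_comm _ (D.z p.2.1 _),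
      add_comm _ (D.z p.2.2 _), add_sub_cancel]
  · simp only [chordLength, D.z_add_zsmul_two_pi ht, add_sub_add_right_eq_sub]

theorem exists_isMinOn_fluidChords (hT : 0 < T) {d C : ℝ} (hC : 0 ≤ C)
    (hne : (D.fluidChords d).Nonempty) :
    ∃ p ∈ D.fluidChords d,
      IsMinOn (fun p => Real.exp (C * p.1) * D.chordLength p) (D.fluidChords d) p := by
  set f : ℝ × ℝ × ℝ → ℝ := fun p => Real.exp (C * p.1) * D.chordLength p with hf
  set K := D.fluidChords d ∩ {p | p.2.1 ∈ Icc 0 (2 * Real.pi)}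
  have hshift : ∀ p ∈ D.fluidChords d, ∃ q ∈ K, f q = f p := fun p hp => by
    obtain ⟨q, hq, hq0, hqt, hqlen⟩ := D.exists_fluidChords_mem_Icc hp
    exact ⟨q, ⟨hq, hq0⟩, by simp only [hf, hqt, hqlen]⟩
  have hcont : ContinuousOn f K :=
    (by fun_prop : Continuous fun p : ℝ × ℝ × ℝ => Real.exp (C * p.1)).continuousOn.mul
      (D.continuousOn_chordLength.mono fun p hp => ⟨hp.1.1, mem_univ _⟩)
  have hclosed : IsClosed K :=
    (D.isClosed_fluidChords hT d).inter (isClosed_Icc.preimage continuous_snd.fst)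
  have hle : ∀ p ∈ K, |p.2.1 - p.2.2| ≤ f p + 2 * A := fun p hp => by
    have hlen : D.chordLength p ≤ f p :=
      le_mul_of_one_le_left (norm_nonneg _) (Real.one_le_exp (mul_nonneg hC hp.1.1.1))
    exact sub_le_iff_le_add.1 ((D.abs_sub_sub_two_mul_le_norm hp.1.1 _ _).trans hlen)
  obtain ⟨p₀, hp₀⟩ := hne
  obtain ⟨q₀, hq₀, -⟩ := hshift p₀ hp₀
  have hbox : IsCompact (Icc (0 : ℝ) T ×ˢ Icc (0 : ℝ) (2 * Real.pi) ×ˢ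
      closedBall (0 : ℝ) (f q₀ + 2 * A + 2 * Real.pi)) :=
    isCompact_Icc.prod (isCompact_Icc.prod (isCompact_closedBall _ _))
  obtain ⟨p, hp, hmin⟩ := hcont.exists_isMinOn' hclosed hq₀ <| by
    filter_upwards [mem_inf_of_left hbox.compl_mem_cocompact,
      mem_inf_of_right (mem_principal_self K)] with q hq hqK
    by_contra! hlt
    refine hq ⟨hqK.1.1, hqK.2, ?_⟩
    rw [mem_closedBall_zero_iff, Real.norm_eq_abs]
    have hβ := abs_sub_abs_le_abs_sub q.2.2 q.2.1
    rw [abs_of_nonneg hqK.2.1, abs_sub_comm] at hβ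
    linarith [hle q hqK, hqK.2.2]
  refine ⟨p, hp.1, fun q hq => ?_⟩
  obtain ⟨q', hq', heq⟩ := hshift q hq
  exact (hmin hq').trans_eq heq

theorem exists_shorter_fluid_chord (hT : 0 < T) (hA : 0 < A) {t α β η C : ℝ}
    (ht : t ∈ Ioc 0 T) (hη : 0 < η) (hC : A ^ 2 < C) (hαβ : α ≠ β)
    (hseg : openSegment ℝ (D.z α t) (D.z β t) ⊆ D.Ω t) :
    ∃ p : ℝ × ℝ × ℝ, p.1 ∈ Icc 0 T ∧ |p.2.1 - α| < η ∧ |p.2.2 - β| < η ∧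
      segment ℝ (D.z p.2.1 p.1) (D.z p.2.2 p.1) ⊆ closure (D.Ω p.1) ∧
      D.chordLength p < Real.exp (C * (t - p.1)) * D.chordLength (t, α, β) := by
  have htT : t ∈ Icc 0 T := Ioc_subset_Icc_self ht
  have hpos : 0 < D.chordLength (t, α, β) :=
    norm_pos_iff.2 (sub_ne_zero.2 ((D.injective_z hT hA htT).ne hαβ))
  obtain ⟨a, ha⟩ := D.exists_hasDerivWithinAt_backward hT hA htT α
  obtain ⟨b, hb⟩ := D.exists_hasDerivWithinAt_backward hT hA htT β
  have hslope : ‖-D.u (D.z α t) t - -D.u (D.z β t) t‖ < C * D.chordLength (t, α, β) := by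
    rw [neg_sub_neg, norm_sub_rev]
    exact (D.norm_velocity_sub_le hA htT hseg).trans_lt (mul_lt_mul_of_pos_right hC hpos)
  have hdecay := eventually_norm_lt_exp_mul_of_hasDerivWithinAt (C := C) ht.1 (ha.sub hb)
    (by simpa [chordLength] using hslope)
  have hpath : Tendsto (fun h : ℝ => (t - h, α - h * a, β - h * b)) (𝓝[>] 0)
      (𝓝[chordDomain T] (t, α, β)) := by
    refine tendsto_nhdsWithin_iff.2 ⟨?_, ?_⟩
    · refine ((by fun_prop : Continuous fun h : ℝ => (t - h, α - h * a, β - h * b)).tendsto' 0 _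
        (by simp)).mono_left nhdsWithin_le_nhds
    · filter_upwards [Ioc_mem_nhdsGT ht.1] with h hh
      exact ⟨⟨by linarith [hh.2], by linarith [hh.1, ht.2]⟩, mem_univ _⟩
  obtain ⟨h, ⟨α', β', hα', hβ', hseg', hlen⟩, hlt, hh⟩ :=
    ((hpath.eventually (D.eventually_exists_fluid_chord hT hA htT hη hseg)).and
      (hdecay.and (Ioc_mem_nhdsGT ht.1))).exists
  refine ⟨(t - h, α', β'), ⟨by linarith [hh.2], by linarith [hh.1, ht.2]⟩, hα', hβ', hseg',
    hlen.trans_lt ?_⟩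
  simpa [chordLength] using hlt

/-- An interior contact point splits the chord into two shorter chords, one of which still has its
ends at least `d` apart. -/
theorem openSegment_subset_of_isMinOn (hT : 0 < T) (hA : 0 < A) {d C : ℝ} {p : ℝ × ℝ × ℝ}
    (hp : p ∈ D.fluidChords d)
    (hmin : IsMinOn (fun p => Real.exp (C * p.1) * D.chordLength p) (D.fluidChords d) p)
    (hd : 0 < d) (hfar : 2 * d ≤ |p.2.1 - p.2.2|) :
    openSegment ℝ (D.z p.2.1 p.1) (D.z p.2.2 p.1) ⊆ D.Ω p.1 := by
  obtain ⟨t, α, β⟩ := p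
  obtain ⟨ht, -, hseg⟩ := hp
  have hpos : 0 < D.chordLength (t, α, β) := norm_pos_iff.2 <| sub_ne_zero.2 <|
    (D.injective_z hT hA ht).ne <| sub_ne_zero.1 <| abs_pos.1 <| by linarith
  have hnear : ∀ a b, segment ℝ (D.z a t) (D.z b t) ⊆ segment ℝ (D.z α t) (D.z β t) →
      D.chordLength (t, a, b) < D.chordLength (t, α, β) → |a - b| < d := by
    intro a b hsub hlt
    by_contra! hab
    have hle := hmin (show (t, a, b) ∈ D.fluidChords d from ⟨ht, hab, hsub.trans hseg⟩)
    exact (mul_lt_mul_of_pos_left hlt (Real.exp_pos (C * t))).not_ge hle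
  by_contra hnot
  obtain ⟨x, hx, hxΩ⟩ := not_subset.1 hnot
  obtain ⟨c, rfl : D.z c t = x⟩ := (D.frontier_eq t ht).le <| by
    rw [(D.isOpen t ht).frontier_eq]
    exact ⟨hseg (openSegment_subset_segment ℝ _ _ hx), hxΩ⟩
  have hc := openSegment_subset_segment ℝ _ _ hx
  obtain ⟨l, ⟨hl0, hl1⟩, hl : D.chordPoint (t, α, β) l = D.z c t⟩ :=
    (openSegment_eq_image_lineMap ℝ (D.z α t) (D.z β t)).le hx
  have hleft := D.norm_chordPoint_sub (t, α, β) 0 l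
  have hright := D.norm_chordPoint_sub (t, α, β) l 1
  rw [hl, abs_of_neg (by linarith)] at hleft hright
  simp only [chordPoint, AffineMap.lineMap_apply_zero, AffineMap.lineMap_apply_one]
    at hleft hright
  have hαc : |α - c| < d := hnear α c
    ((convex_segment _ _).segment_subset (left_mem_segment ℝ _ _) hc) <| by
      rw [chordLength, hleft]
      exact mul_lt_of_lt_one_left hpos (by linarith)
  have hcβ : |c - β| < d := hnear c β
    ((convex_segment _ _).segment_subset hc (right_mem_segment ℝ _ _)) <| by
      rw [chordLength, hright]
      exact mul_lt_of_lt_one_left hpos (by linarith)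
  exact hfar.not_gt ((abs_sub_le α c β).trans_lt (by linarith))

theorem not_isMinOn_fluidChords (hT : 0 < T) (hA : 0 < A) {d C : ℝ} (hd : 0 < d)
    (hC : A ^ 2 < C) {p : ℝ × ℝ × ℝ} (hp : p ∈ D.fluidChords d) (ht : 0 < p.1)
    (hfar : 2 * d < |p.2.1 - p.2.2|) :
    ¬ IsMinOn (fun p => Real.exp (C * p.1) * D.chordLength p) (D.fluidChords d) p := by
  intro hmin
  have hopen := D.openSegment_subset_of_isMinOn hT hA hp hmin hd hfar.le
  obtain ⟨t, α, β⟩ := p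
  have hαβ : α ≠ β := sub_ne_zero.1 (abs_pos.1 (by linarith))
  obtain ⟨⟨s, a, b⟩, hs, ha : |a - α| < d / 2, hb : |b - β| < d / 2, hseg, hshort⟩ :=
    D.exists_shorter_fluid_chord hT hA ⟨ht, hp.1.2⟩ (half_pos hd) hC hαβ hopen
  have hab : d ≤ |a - b| := by
    rw [abs_sub_comm] at ha
    linarith [abs_sub_le α a β, abs_sub_le a b β]
  have hle : Real.exp (C * t) * D.chordLength (t, α, β) ≤
      Real.exp (C * s) * D.chordLength (s, a, b) :=
    hmin (show (s, a, b) ∈ D.fluidChords d from ⟨hs, hab, hseg⟩)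
  refine hle.not_gt ?_
  calc Real.exp (C * s) * D.chordLength (s, a, b)
      < Real.exp (C * s) * (Real.exp (C * (t - s)) * D.chordLength (t, α, β)) := by gcongr
    _ = Real.exp (C * t) * D.chordLength (t, α, β) := by
        rw [← mul_assoc, ← Real.exp_add]
        ring_nf

theorem le_exp_mul_chordLength (hT : 0 < T) (hA : 0 < A) {p : ℝ × ℝ × ℝ}
    (hp : p ∈ D.fluidChords (4 * A ^ 2)⁻¹) :
    (4 * A ^ 2)⁻¹ / (2 * A) ≤ Real.exp ((A ^ 2 + 1) * p.1) * D.chordLength p := by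
  set d : ℝ := (4 * A ^ 2)⁻¹ with hd
  have htwo : 2 * d = (2 * A ^ 2)⁻¹ := by
    rw [hd]
    field_simp
    norm_num
  obtain ⟨⟨t, α, β⟩, hq, hmin⟩ :=
    D.exists_isMinOn_fluidChords hT (C := A ^ 2 + 1) (by positivity) ⟨p, hp⟩
  refine le_trans ?_ (hmin hp)
  by_contra! hlt
  have ht : t ∈ Icc 0 T := hq.1
  have hsep : d ≤ |α - β| := hq.2.1
  have hlen : D.chordLength (t, α, β) < d / (2 * A) :=
    (le_mul_of_one_le_left (norm_nonneg _)
      (Real.one_le_exp (mul_nonneg (by positivity) ht.1))).trans_lt hlt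
  have hfar : 2 * d < |α - β| := by
    by_contra! hnear
    refine hlen.not_ge (le_trans ?_ (D.abs_sub_div_le_norm hT hA ht (hnear.trans_eq htwo)))
    gcongr
  have ht0 : t ≠ 0 := by
    rintro rfl
    refine hlen.not_ge (le_trans ?_ (D.chordArc_zero α β))
    rw [div_eq_inv_mul]
    gcongr
    linarith
  exact D.not_isMinOn_fluidChords hT hA (by positivity) (lt_add_one _) hq
    (ht.1.lt_of_ne' ht0) hfar hmin

end OneFluid

theorem splash_only_through_second_fluid_general {T A : ℝ} (hT : 0 < T) (hA : 0 < A) {δ : ℝ}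
    (hδ : 0 < δ) :
    ∃ ε : ℝ, 0 < ε ∧ ∀ D : OneFluid T A, ∀ t ∈ Icc 0 T, ∀ α β : ℝ, δ ≤ |α - β| →
      segment ℝ (D.z α t) (D.z β t) ⊆ closure (D.Ω t) → ε ≤ ‖D.z α t - D.z β t‖ := by
  set d : ℝ := (4 * A ^ 2)⁻¹ with hd
  refine ⟨min (δ / (2 * A)) (d / (2 * A) * Real.exp (-((A ^ 2 + 1) * T))), by positivity,
    fun D t ht α β hαβ hseg => ?_⟩
  rcases le_total |α - β| (2 * A ^ 2)⁻¹ with hnear | hfar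
  · refine (min_le_left _ _).trans (le_trans ?_ (D.abs_sub_div_le_norm hT hA ht hnear))
    gcongr
  · have hchord : (t, α, β) ∈ D.fluidChords d :=
      ⟨ht, le_trans (by rw [hd]; gcongr; norm_num) hfar, hseg⟩
    refine (min_le_right _ _).trans ?_
    rw [Real.exp_neg, mul_inv_le_iff₀ (Real.exp_pos _), mul_comm ‖_‖]
    calc d / (2 * A) ≤ Real.exp ((A ^ 2 + 1) * t) * ‖D.z α t - D.z β t‖ :=
          D.le_exp_mul_chordLength hT hA hchord
      _ ≤ Real.exp ((A ^ 2 + 1) * T) * ‖D.z α t - D.z β t‖ := by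
          gcongr
          exact ht.2

/-- **A splash can only occur through the second fluid (Lemma 2.4).**  For every `δ > 0` there is
`ε₃ > 0`, depending only on `A`, `T`, `δ` and the constants `σ`, `g`, `ρ¹`, `ρ²`, such that if
`t ∈ [0,T]`, `|α − β| ≥ δ`, and the segment joining `z(α,t)` and `z(β,t)` is contained in the
closure of `Ω¹(t)`, then `|z(α,t) − z(β,t)| ≥ ε₃`. -/
theorem splash_only_through_second_fluid (ρ1 ρ2 σ grav T A : ℝ)
    (hρ1 : 0 < ρ1) (hρ2 : 0 < ρ2) (hσ : 0 ≤ σ) (hgrav : 0 ≤ grav) (hT : 0 < T) (hA : 1 ≤ A)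
    (δ : ℝ) (hδ : 0 < δ) :
    ∃ ε3 : ℝ, 0 < ε3 ∧
      ∀ D : TwoFluid ρ1 ρ2 σ grav T A, ∀ t ∈ Icc (0:ℝ) T, ∀ α β : ℝ,
        δ ≤ |α - β| →
        segment ℝ (D.z α t) (D.z β t) ⊆ closure (D.Ω1 t) →
        ε3 ≤ ‖D.z α t - D.z β t‖ := by
  obtain ⟨ε, hε, h⟩ := splash_only_through_second_fluid_general hT (zero_lt_one.trans_le hA) hδ
  exact ⟨ε, hε, fun D => h (D.toOneFluid hT)⟩
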